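/- arXiv:2509.05055 — 3 statements merged into one kernel-verified Lean document; each statement's English description precedes it below -/
import Mathlib

section
/- Let D be a graded digraph on n vertices that has at least one edge, and let Δ be its maximum degree. Then the oriented Ramsey number of D satisfies r⃗(D) ≤ 10⁹ · Δ³ · 2^(4Δ) · n. -/
/-- A tournament: a digraph in which every pair of distinct vertices is joined
by an edge in exactly one direction, and there are no loops. -/
def Digraph.IsTournament {V : Type*} (T : Digraph V) : Prop :=
  (∀ v : V, ¬ T.Adj v v) ∧ ∀ u v : V, u ≠ v → (T.Adj u v ↔ ¬ T.Adj v u)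

/-- `T` contains a copy of `G`: an injective map preserving directed edges. -/
def Digraph.ContainsCopy {V W : Type*} (T : Digraph W) (G : Digraph V) : Prop :=
  ∃ φ : V → W, Function.Injective φ ∧ ∀ u v : V, G.Adj u v → T.Adj (φ u) (φ v)

/-- The oriented Ramsey number of `G`: the least `N` such that every tournament on `N`
vertices contains a copy of `G`. -/
noncomputable def orientedRamsey {V : Type*} (G : Digraph V) : ℕ :=
  sInf {N : ℕ | ∀ T : Digraph (Fin N), T.IsTournament → T.ContainsCopy G}

/-- The degree of a vertex in the underlying undirected graph of a digraph. -/
noncomputable def Digraph.degree {V : Type*} (G : Digraph V) (v : V) : ℕ :=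
  Nat.card {u : V | G.Adj v u ∨ G.Adj u v}

/-!
A tournament has a median order, in which every vertex receives edges from at least half of each
interval of vertices preceding it. Working backwards along such an order, choose for the levels of
the graded digraph disjoint hosts `A 0, …, A H`: an interval long compared to its distance from the
host `A (i + 1)` sends edges to it with density almost `1 / 2`, so one of its blocks is dense, and
dependent random choice inside that block gives a host `A i` almost all of whose small tuples have
many common out-neighbours in `A (i + 1)`. The digraph is then embedded level by level from the
first host on. By the method of conditional expectations, a level can be embedded vertex by vertex
so that no set of in-neighbours of a vertex of the next level is mapped to a bad tuple, which
leaves every vertex of the next level enough room.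
-/

namespace GradedRamsey

open Finset

section Greedy

variable {V W α : Type*}

section Consistent

variable {ι : Type*} [Fintype ι] [DecidableEq V] [DecidableEq α]

/-- The forbidden tuples in `B` that are still possible once `φ` has been fixed on `S`, where
entry `j` of a tuple prescribes the value of `φ` at the vertex `e j`. -/
def consistentTuples (B : Finset (ι → α)) (e : ι → V) (S : Finset V) (φ : V → α) :
    Finset (ι → α) :=
  {g ∈ B | ∀ j, e j ∈ S → g j = φ (e j)}

variable {B : Finset (ι → α)} {e : ι → V} {S : Finset V} {φ : V → α} {v : V}

lemma consistentTuples_empty : consistentTuples B e ∅ φ = B := by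
  simp [consistentTuples]

lemma consistentTuples_insert_update_of_forall_ne (hv : ∀ j, e j ≠ v) (x : α) :
    consistentTuples B e (insert v S) (Function.update φ v x) = consistentTuples B e S φ := by
  simp [consistentTuples, hv]

lemma sum_card_consistentTuples_insert_update_le (hvS : v ∉ S) (hv : ∃ j, e j = v)
    (C : Finset α) :
    ∑ x ∈ C, #(consistentTuples B e (insert v S) (Function.update φ v x)) ≤
      #(consistentTuples B e S φ) := by
  obtain ⟨i, rfl⟩ := hv
  have fiber_subset (x : α) :
      consistentTuples B e (insert (e i) S) (Function.update φ (e i) x) ⊆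
        {g ∈ consistentTuples B e S φ | g i = x} := by
    intro g hg
    simp only [consistentTuples, mem_filter, mem_insert] at hg ⊢
    refine ⟨⟨hg.1, fun j hj => ?_⟩, by simpa using hg.2 i (.inl rfl)⟩
    have hne : e j ≠ e i := fun h => hvS (h ▸ hj)
    simpa [hne] using hg.2 j (.inr hj)
  calc _ ≤ ∑ x ∈ C, #{g ∈ consistentTuples B e S φ | g i = x} :=
        sum_le_sum fun x _ => card_le_card (fiber_subset x)
    _ = #{g ∈ consistentTuples B e S φ | g i ∈ C} := sum_card_fiberwise_eq_card_filter _ _ _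
    _ ≤ _ := card_filter_le _ _

lemma card_filter_consistentTuples_mul_le (hvS : v ∉ S) (hv : ∃ j, e j = v) (C : Finset α)
    (d m : ℕ) :
    #{x ∈ C | d * #(consistentTuples B e S φ) <
      m * #(consistentTuples B e (insert v S) (Function.update φ v x))} * d ≤ m := by
  set X := {x ∈ C | d * #(consistentTuples B e S φ) <
    m * #(consistentTuples B e (insert v S) (Function.update φ v x))}
  obtain hX₀ | hX₀ := X.eq_empty_or_nonempty
  · simp [hX₀]
  refine (lt_of_mul_lt_mul_right (a := #(consistentTuples B e S φ)) ?_ (Nat.zero_le _)).le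
  calc #X * d * #(consistentTuples B e S φ)
      = ∑ _x ∈ X, d * #(consistentTuples B e S φ) := by rw [sum_const, smul_eq_mul, mul_assoc]
    _ < ∑ x ∈ X, m * #(consistentTuples B e (insert v S) (Function.update φ v x)) :=
        sum_lt_sum_of_nonempty hX₀ fun x hx => (mem_filter.1 hx).2
    _ ≤ m * #(consistentTuples B e S φ) := by
        rw [← mul_sum]
        exact Nat.mul_le_mul_left _ (sum_card_consistentTuples_insert_update_le hvS hv X)

end Consistent

variable {ι : W → Type*} [∀ w, Fintype (ι w)] [DecidableEq V] {e : ∀ w, ι w → V}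
  {B : ∀ w, Finset (ι w → α)} {Ws : Finset W} {d m : ℕ}

lemma exists_value_of_card_consistentTuples_le [DecidableEq α] {S : Finset V} {φ : V → α}
    {v : V} {C : Finset α} (hd : 0 < d) (hvS : v ∉ S) (hS : #S < m) (hC : 2 * m ≤ #C)
    (hdeg : #{w ∈ Ws | ∃ j, e w j = v} ≤ d) :
    ∃ x ∈ C, x ∉ S.image φ ∧ ∀ w ∈ Ws, (∃ j, e w j = v) →
      m * #(consistentTuples (B w) (e w) (insert v S) (Function.update φ v x)) ≤
        d * #(consistentTuples (B w) (e w) S φ) := by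
  let heavy (w : W) : Finset α := {x ∈ C | d * #(consistentTuples (B w) (e w) S φ) <
    m * #(consistentTuples (B w) (e w) (insert v S) (Function.update φ v x))}
  let Wv : Finset W := {w ∈ Ws | ∃ j, e w j = v}
  have card_heavy : ∀ w ∈ Wv, #(heavy w) ≤ m / d := fun w hw =>
    (Nat.le_div_iff_mul_le hd).2
      (card_filter_consistentTuples_mul_le hvS (mem_filter.1 hw).2 C d m)
  have card_excluded : #(S.image φ ∪ Wv.biUnion heavy) < #C :=
    calc #(S.image φ ∪ Wv.biUnion heavy)
        ≤ #(S.image φ) + #(Wv.biUnion heavy) := card_union_le _ _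
      _ ≤ #S + d * (m / d) := Nat.add_le_add card_image_le <|
          (card_biUnion_le_card_mul _ _ _ card_heavy).trans (Nat.mul_le_mul_right _ hdeg)
      _ < m + m := Nat.add_lt_add_of_lt_of_le hS (Nat.mul_div_le m d)
      _ ≤ #C := by omega
  obtain ⟨x, hxC, hx⟩ := exists_mem_notMem_of_card_lt_card card_excluded
  rw [mem_union, not_or] at hx
  refine ⟨x, hxC, hx.1, fun w hw hwv => not_lt.1 fun hlt => hx.2 ?_⟩
  exact mem_biUnion.2 ⟨w, mem_filter.2 ⟨hw, hwv⟩, mem_filter.2 ⟨hxC, hlt⟩⟩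

lemma card_filter_mem_insert_of_apply_eq {ι : Type*} [Fintype ι] {e : ι → V}
    (he : Function.Injective e) {S : Finset V} {i : ι} (hi : e i ∉ S) :
    #{j | e j ∈ insert (e i) S} = #{j | e j ∈ S} + 1 := by
  classical
  rw [← card_insert_of_notMem (s := {j | e j ∈ S}) (a := i) (by simpa using hi)]
  congr 1
  ext j
  simp [he.eq_iff]

/-- The method of conditional expectations: the bound on the number of consistent tuples drops
by a factor `d / m` whenever a vertex of the constraint is embedded, so that it is below `1` when
all of them are. -/
lemma exists_injOn_card_consistentTuples_le [DecidableEq α] [Nonempty α] {L : Finset V}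
    {C : V → Finset α} (hd : 0 < d) (hL : #L ≤ m) (hC : ∀ v ∈ L, 2 * m ≤ #(C v))
    (he : ∀ w ∈ Ws, Function.Injective (e w))
    (hdeg : ∀ v ∈ L, #{w ∈ Ws | ∃ j, e w j = v} ≤ d) {S : Finset V} (hSL : S ⊆ L) :
    ∃ φ : V → α, (∀ v ∈ S, φ v ∈ C v) ∧ Set.InjOn φ S ∧ ∀ w ∈ Ws,
      m ^ #{j | e w j ∈ S} * #(consistentTuples (B w) (e w) S φ) ≤
        d ^ #{j | e w j ∈ S} * #(B w) := by
  induction S using Finset.induction_on with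
  | empty => exact ⟨fun _ => Classical.arbitrary α, by simp, by simp, by
      simp [consistentTuples_empty]⟩
  | insert v S hvS ih =>
    obtain ⟨φ, hφC, hφinj, hφB⟩ := ih ((subset_insert v S).trans hSL)
    have hvL : v ∈ L := hSL (mem_insert_self v S)
    have hSm : #S < m := by
      have := (card_le_card hSL).trans hL
      rwa [card_insert_of_notMem hvS] at this
    obtain ⟨x, hxC, hxS, hxB⟩ := exists_value_of_card_consistentTuples_le (B := B) (φ := φ)
      hd hvS hSm (hC v hvL) (hdeg v hvL)
    have update_eqOn : Set.EqOn (Function.update φ v x) φ S :=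
      fun u hu => Function.update_of_ne (ne_of_mem_of_not_mem hu hvS) _ _
    refine ⟨Function.update φ v x, ?_, ?_, fun w hw => ?_⟩
    · rw [forall_mem_insert, Function.update_self]
      exact ⟨hxC, fun u hu => update_eqOn hu ▸ hφC u hu⟩
    · rw [coe_insert, Set.injOn_insert (mod_cast hvS), update_eqOn.image_eq,
        Function.update_self]
      exact ⟨update_eqOn.injOn_iff.2 hφinj, by simpa using hxS⟩
    · by_cases hwv : ∃ j, e w j = v
      · have hx := hxB w hw hwv
        obtain ⟨i, rfl⟩ := hwv
        rw [card_filter_mem_insert_of_apply_eq (he w hw) hvS, pow_succ, pow_succ, mul_assoc]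
        calc _ ≤ m ^ #{j | e w j ∈ S} * (d * #(consistentTuples (B w) (e w) S φ)) := by gcongr
          _ = d * (m ^ #{j | e w j ∈ S} * #(consistentTuples (B w) (e w) S φ)) := by ring
          _ ≤ d * (d ^ #{j | e w j ∈ S} * #(B w)) := Nat.mul_le_mul_left _ (hφB w hw)
          _ = _ := by ring
      · push Not at hwv
        simpa [consistentTuples_insert_update_of_forall_ne hwv, hwv] using hφB w hw

theorem exists_injOn_forall_notMem [Nonempty α] {L : Finset V} {C : V → Finset α}
    (hd : 0 < d) (hL : #L ≤ m) (hC : ∀ v ∈ L, 2 * m ≤ #(C v))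
    (he : ∀ w ∈ Ws, Function.Injective (e w)) (heL : ∀ w ∈ Ws, ∀ j, e w j ∈ L)
    (hdeg : ∀ v ∈ L, #{w ∈ Ws | ∃ j, e w j = v} ≤ d)
    (hB : ∀ w ∈ Ws, #(B w) * d ^ Fintype.card (ι w) < m ^ Fintype.card (ι w)) :
    ∃ φ : V → α, (∀ v ∈ L, φ v ∈ C v) ∧ Set.InjOn φ L ∧
      ∀ w ∈ Ws, (fun j => φ (e w j)) ∉ B w := by
  classical
  obtain ⟨φ, hφC, hφinj, hφB⟩ :=
    exists_injOn_card_consistentTuples_le (B := B) hd hL hC he hdeg subset_rfl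
  refine ⟨φ, hφC, hφinj, fun w hw hmem => (hB w hw).not_ge ?_⟩
  have one_le : 1 ≤ #(consistentTuples (B w) (e w) L φ) :=
    card_pos.2 ⟨_, mem_filter.2 ⟨hmem, fun _ _ => rfl⟩⟩
  have card_eq : #{j | e w j ∈ L} = Fintype.card (ι w) := by
    rw [filter_true_of_mem fun j _ => heL w hw j, card_univ]
  have := hφB w hw
  rw [card_eq] at this
  calc m ^ Fintype.card (ι w) ≤ _ := Nat.le_mul_of_pos_right _ one_le
    _ ≤ _ := this
    _ = _ := mul_comm _ _

end Greedy

section DependentRandomChoice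

variable {α β ι κ : Type*} [Fintype ι] [Fintype κ]
  (T : α → β → Prop) [∀ x y, Decidable (T x y)]

/-- The common in-neighbourhood in `B` of the entries of a tuple `y`. -/
def commonIn (B : Finset α) (y : κ → β) : Finset α := {x ∈ B | ∀ j, T x (y j)}

lemma commonIn_subset (B : Finset α) (y : κ → β) : commonIn T B y ⊆ B := filter_subset _ _

variable [DecidableEq ι] [DecidableEq κ]

/-- The tuples in `A` with fewer than `b` common out-neighbours in `Y`. -/
def badTuples (A : Finset α) (Y : Finset β) (b : ℕ) (ι : Type*) [Fintype ι] [DecidableEq ι] :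
    Finset (ι → α) :=
  {g ∈ Fintype.piFinset fun _ => A | #{y ∈ Y | ∀ j, T (g j) y} < b}

lemma card_badTuples_congr (e : ι ≃ κ) (A : Finset α) (Y : Finset β) (b : ℕ) :
    #(badTuples T A Y b ι) = #(badTuples T A Y b κ) := by
  refine card_equiv (e.arrowCongr (Equiv.refl α)) fun g => ?_
  simp [badTuples, e.symm.forall_congr_left]

lemma card_filter_piFinset_forall (Y : Finset β) (P : β → Prop) [DecidablePred P] :
    #{y ∈ Fintype.piFinset fun _ : κ => Y | ∀ j, P (y j)} = #{y ∈ Y | P y} ^ Fintype.card κ := by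
  rw [← card_univ, ← prod_const, ← Fintype.card_piFinset]
  congr 1
  ext y
  simp [forall_and]

lemma sum_card_commonIn (B : Finset α) (Y : Finset β) :
    ∑ y ∈ Fintype.piFinset fun _ : κ => Y, #(commonIn T B y) =
      ∑ x ∈ B, #{y ∈ Y | T x y} ^ Fintype.card κ := by
  simp only [← card_filter_piFinset_forall]
  exact (sum_card_bipartiteAbove_eq_sum_card_bipartiteBelow
    fun x (y : κ → β) => ∀ j, T x (y j)).symm

lemma pow_mul_card_le_sum_card_commonIn {B : Finset α} {Y : Finset β} {δ : ℝ} (hδ : 0 ≤ δ)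
    (hB : B.Nonempty) (hdense : δ * #B * #Y ≤ ∑ x ∈ B, (#{y ∈ Y | T x y} : ℝ)) :
    (δ * #Y) ^ Fintype.card κ * #B ≤
      ∑ y ∈ Fintype.piFinset fun _ : κ => Y, (#(commonIn T B y) : ℝ) := by
  have hB' : (0 : ℝ) < #B := mod_cast hB.card_pos
  have jensen := Real.pow_arith_mean_le_arith_mean_pow B (fun _ => (#B : ℝ)⁻¹)
    (fun x => (#{y ∈ Y | T x y} : ℝ)) (fun _ _ => by positivity) (by simp [hB'.ne'])
    (fun _ _ => by positivity) (Fintype.card κ)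
  rw [← mul_sum, ← mul_sum] at jensen
  have mean_ge : δ * #Y ≤ (#B : ℝ)⁻¹ * ∑ x ∈ B, (#{y ∈ Y | T x y} : ℝ) := by
    rw [le_inv_mul_iff₀ hB']
    linarith
  calc (δ * #Y) ^ Fintype.card κ * #B
      ≤ ((#B : ℝ)⁻¹ * ∑ x ∈ B, (#{y ∈ Y | T x y} : ℝ)) ^ Fintype.card κ * #B := by
        gcongr
    _ ≤ ∑ x ∈ B, (#{y ∈ Y | T x y} : ℝ) ^ Fintype.card κ := by
        rwa [← le_div_iff₀ hB', div_eq_inv_mul]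
    _ = _ := mod_cast (sum_card_commonIn T B Y).symm

lemma sum_card_badTuples_commonIn_le (B : Finset α) (Y : Finset β) (b : ℕ) :
    ∑ y ∈ Fintype.piFinset fun _ : κ => Y, #(badTuples T (commonIn T B y) Y b ι) ≤
      #B ^ Fintype.card ι * b ^ Fintype.card κ := by
  have badTuples_commonIn (y : κ → β) : badTuples T (commonIn T B y) Y b ι =
      {g ∈ badTuples T B Y b ι | ∀ j i, T (g i) (y j)} := by
    ext g
    simp only [badTuples, commonIn, mem_filter, Fintype.mem_piFinset, forall_and]
    rw [forall_comm (p := fun i j => T (g i) (y j))]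
    tauto
  calc ∑ y ∈ Fintype.piFinset fun _ : κ => Y, #(badTuples T (commonIn T B y) Y b ι)
      = ∑ g ∈ badTuples T B Y b ι, #{y ∈ Fintype.piFinset fun _ : κ => Y |
          ∀ j i, T (g i) (y j)} := by
        simp only [badTuples_commonIn]
        exact sum_card_bipartiteAbove_eq_sum_card_bipartiteBelow
          fun (y : κ → β) (g : ι → α) => ∀ j i, T (g i) (y j)
    _ ≤ ∑ _g ∈ badTuples T B Y b ι, b ^ Fintype.card κ := by
        refine sum_le_sum fun g hg => ?_
        rw [card_filter_piFinset_forall Y fun y => ∀ i, T (g i) y]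
        exact Nat.pow_le_pow_left (mem_filter.1 hg).2.le _
    _ ≤ #B ^ Fintype.card ι * b ^ Fintype.card κ := by
        rw [sum_const, smul_eq_mul]
        gcongr
        refine (card_filter_le _ _).trans_eq ?_
        rw [Fintype.card_piFinset, prod_const, card_univ]

lemma sum_weight_badTuples_commonIn_le {B : Finset α} {Y : Finset β} {δ : ℝ} (hδ : 0 ≤ δ)
    (hB : B.Nonempty) {b : ℕ} (hb : 0 < b) (t a : ℕ) :
    ∑ y ∈ Fintype.piFinset fun _ : Fin t => Y, ∑ k ∈ range (a + 1),
      #(badTuples T (commonIn T B y) Y b (Fin k)) *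
        ((δ * #Y) ^ t / (2 * (a + 1) * (#B : ℝ) ^ k * b ^ t)) ≤ (δ * #Y) ^ t / 2 := by
  have sum_le (k : ℕ) : ∑ y ∈ Fintype.piFinset fun _ : Fin t => Y,
      #(badTuples T (commonIn T B y) Y b (Fin k)) *
        ((δ * #Y) ^ t / (2 * (a + 1) * (#B : ℝ) ^ k * b ^ t)) ≤
      (δ * #Y) ^ t / (2 * (a + 1)) := by
    have bad_le : ∑ y ∈ Fintype.piFinset fun _ : Fin t => Y,
        (#(badTuples T (commonIn T B y) Y b (Fin k)) : ℝ) ≤ (#B : ℝ) ^ k * b ^ t := by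
      have := sum_card_badTuples_commonIn_le (ι := Fin k) (κ := Fin t) T B Y b
      rw [Fintype.card_fin, Fintype.card_fin] at this
      exact_mod_cast this
    rw [← sum_mul]
    refine (mul_le_mul_of_nonneg_right bad_le (by positivity)).trans_eq ?_
    field_simp
  rw [sum_comm]
  refine (sum_le_sum fun k _ => sum_le k).trans_eq ?_
  rw [sum_const, card_range, nsmul_eq_mul]
  push_cast
  field_simp

/-- Dependent random choice: the common in-neighbourhood `A` of `t` uniformly random elements of
`Y` is large on average, while a tuple with few common out-neighbours is unlikely to lie in it. -/
theorem exists_subset_card_badTuples_le {B : Finset α} {Y : Finset β} {δ : ℝ} (hδ : 0 ≤ δ)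
    (hB : B.Nonempty) (hY : Y.Nonempty) {b : ℕ} (hb : 0 < b)
    (hdense : δ * #B * #Y ≤ ∑ x ∈ B, (#{y ∈ Y | T x y} : ℝ)) (t a : ℕ) :
    ∃ A ⊆ B, #B * δ ^ t / 2 ≤ #A ∧ ∀ k ≤ a,
      #(badTuples T A Y b (Fin k)) * (δ * #Y) ^ t ≤ 2 * (a + 1) * (#B : ℝ) ^ k * b ^ t := by
  have hB' : (0 : ℝ) < #B := mod_cast hB.card_pos
  let tuples : Finset (Fin t → β) := Fintype.piFinset fun _ => Y
  let weight (y : Fin t → β) (k : ℕ) : ℝ := #(badTuples T (commonIn T B y) Y b (Fin k)) *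
    ((δ * #Y) ^ t / (2 * (a + 1) * (#B : ℝ) ^ k * b ^ t))
  have weight_nonneg (y k) : 0 ≤ weight y k := by positivity
  have average : ∑ _y ∈ tuples, δ ^ t / 2 ≤
      ∑ y ∈ tuples, (#(commonIn T B y) / #B - ∑ k ∈ range (a + 1), weight y k) := by
    have sum_card_ge : (δ * #Y) ^ t ≤ ∑ y ∈ tuples, (#(commonIn T B y) / #B : ℝ) := by
      rw [← sum_div, le_div_iff₀ hB']
      simpa using pow_mul_card_le_sum_card_commonIn (κ := Fin t) T hδ hB hdense
    have sum_weight_le : ∑ y ∈ tuples, ∑ k ∈ range (a + 1), weight y k ≤ (δ * #Y) ^ t / 2 :=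
      sum_weight_badTuples_commonIn_le T hδ hB hb t a
    have card_tuples : (#tuples : ℝ) = (#Y : ℝ) ^ t := by simp [tuples]
    rw [sum_sub_distrib, sum_const, nsmul_eq_mul, card_tuples]
    rw [mul_pow] at sum_card_ge sum_weight_le
    linarith
  obtain ⟨y, -, hy⟩ := exists_le_of_sum_le (Fintype.piFinset_nonempty.2 fun _ => hY) average
  have total_nonneg : 0 ≤ ∑ k ∈ range (a + 1), weight y k :=
    sum_nonneg fun k _ => weight_nonneg y k
  have card_div_le_one : (#(commonIn T B y) / #B : ℝ) ≤ 1 :=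
    (div_le_one hB').2 (mod_cast card_le_card (commonIn_subset T B y))
  refine ⟨commonIn T B y, commonIn_subset T B y, ?_, fun k hk => ?_⟩
  · have : δ ^ t / 2 ≤ #(commonIn T B y) / #B := by linarith
    rw [le_div_iff₀ hB'] at this
    linarith
  · have weight_le_one : weight y k ≤ 1 := by
      have := single_le_sum (fun k _ => weight_nonneg y k) (mem_range_succ_iff.2 hk)
      have : 0 ≤ δ ^ t := by positivity
      linarith
    simp only [weight, ← mul_div_assoc] at weight_le_one
    rwa [div_le_one (by positivity)] at weight_le_one

end DependentRandomChoice

section MedianOrder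

/-- The number of pairs of positions `i < j` in the list with an edge from entry `i` to entry `j`;
a median order maximises it. -/
def forwardCount {X : Type*} (T : X → X → Prop) [DecidableRel T] : List X → ℕ
  | [] => 0
  | x :: l => l.countP (T x ·) + forwardCount T l

lemma forwardCount_append_cons_append {X : Type*} (T : X → X → Prop) [DecidableRel T]
    (l₁ l₂ l₃ : List X) (v : X) :
    forwardCount T (l₁ ++ v :: (l₂ ++ l₃)) + l₂.countP (T · v) =
      forwardCount T (l₁ ++ (l₂ ++ v :: l₃)) + l₂.countP (T v ·) := by
  induction l₁ with
  | nil =>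
    induction l₂ with
    | nil => simp
    | cons y l₂ ih =>
      simp only [List.nil_append, List.cons_append, forwardCount, List.countP_append,
        List.countP_cons] at ih ⊢
      omega
  | cons x l₁ ih =>
    have hperm : (l₁ ++ v :: (l₂ ++ l₃)).Perm (l₁ ++ (l₂ ++ v :: l₃)) :=
      List.perm_middle.symm.append_left l₁
    simp only [List.cons_append, forwardCount, hperm.countP_eq]
    omega

lemma countP_adj_add_countP_adj {W : Type*} {T : Digraph W} [DecidableRel T.Adj]
    (hT : T.IsTournament) {v : W} {l : List W} (hv : v ∉ l) :
    l.countP (T.Adj · v) + l.countP (T.Adj v ·) = l.length := by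
  rw [l.length_eq_countP_add_countP (T.Adj · v)]
  congr 1
  refine List.countP_congr fun x hx => ?_
  simp [hT.2 v x (ne_of_mem_of_not_mem hx hv).symm]

lemma exists_median_list {W : Type*} [Fintype W] {T : Digraph W} [DecidableRel T.Adj]
    (hT : T.IsTournament) :
    ∃ l : List W, l.Nodup ∧ l.length = Fintype.card W ∧ ∀ l₁ l₂ l₃ v,
      l = l₁ ++ (l₂ ++ v :: l₃) → l₂.length ≤ 2 * l₂.countP (T.Adj · v) := by
  classical
  obtain ⟨l, hl, hmax⟩ := (univ.toList (α := W)).permutations.toFinset.exists_max_image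
    (forwardCount T.Adj) ⟨univ.toList, by simp⟩
  simp only [List.mem_toFinset, List.mem_permutations] at hl hmax
  have hnodup : l.Nodup := hl.nodup_iff.2 (nodup_toList _)
  refine ⟨l, hnodup, by rw [hl.length_eq, length_toList, card_univ], ?_⟩
  rintro l₁ l₂ l₃ v rfl
  have hperm : (l₁ ++ v :: (l₂ ++ l₃)).Perm (l₁ ++ (l₂ ++ v :: l₃)) :=
    List.perm_middle.symm.append_left l₁
  have moved := forwardCount_append_cons_append T.Adj l₁ l₂ l₃ v
  have not_better := hmax _ (hperm.trans hl)
  have hv : v ∉ l₂ := fun h =>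
    List.disjoint_of_nodup_append hnodup.of_append_right h List.mem_cons_self
  have := countP_adj_add_countP_adj hT hv
  omega

/-- Positions `0, …, N - 1` are a median order of the tournament `T` as far as is needed here:
every position `q < N` receives edges from at least half of each interval `[p, q)` before it. -/
def IsMedianOrdered (T : ℕ → ℕ → Prop) [DecidableRel T] (N : ℕ) : Prop :=
  ∀ p q, p ≤ q → q < N → q - p ≤ 2 * #{r ∈ Ico p q | T r q}

theorem exists_isMedianOrdered {W : Type*} [Fintype W] [Nonempty W] {T : Digraph W}
    [DecidableRel T.Adj] (hT : T.IsTournament) :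
    ∃ σ : ℕ → W, Set.InjOn σ (Set.Iio (Fintype.card W)) ∧
      IsMedianOrdered (fun i j => T.Adj (σ i) (σ j)) (Fintype.card W) := by
  obtain ⟨l, hnodup, hlen, hmedian⟩ := exists_median_list hT
  let σ (i : ℕ) : W := l.getD i (Classical.arbitrary W)
  have σ_eq (i : ℕ) (hi : i < l.length) : σ i = l[i] := List.getD_eq_getElem _ _ hi
  refine ⟨σ, fun i hi j hj hij => ?_, fun p q hpq hq => ?_⟩
  · rw [← hlen, Set.mem_Iio] at hi hj
    rwa [σ_eq i hi, σ_eq j hj, hnodup.getElem_inj_iff] at hij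
  · rw [← hlen] at hq
    have interval_eq : (l.drop p).take (q - p) = (List.range' p (q - p)).map σ := by
      refine List.ext_getElem (by simp; omega) fun i hi _ => ?_
      simp only [List.length_take, List.length_drop] at hi
      simp [σ_eq (p + i) (by omega)]
    have split : l = l.take p ++ ((List.range' p (q - p)).map σ ++ σ q :: l.drop (q + 1)) := by
      rw [← interval_eq, σ_eq q hq, ← List.drop_eq_getElem_cons hq]
      conv_lhs => rw [← l.take_append_drop p, ← (l.drop p).take_append_drop (q - p),
        List.drop_drop, Nat.add_sub_cancel' hpq]
    have := hmedian _ _ _ _ split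
    rw [List.length_map, List.length_range', List.countP_map, List.countP_eq_length_filter] at this
    exact this

lemma IsMedianOrdered.sub_le_two_mul_card_add {T : ℕ → ℕ → Prop} [DecidableRel T] {N : ℕ}
    (hT : IsMedianOrdered T N) {w p y : ℕ} (hwp : w ≤ p) (hpy : p ≤ y) (hy : y < N) :
    p - w ≤ 2 * #{x ∈ Ico w p | T x y} + (y - p) := by
  have median := hT w y (hwp.trans hpy) hy
  have card_le : #{x ∈ Ico w y | T x y} ≤ #{x ∈ Ico w p | T x y} + (y - p) := by
    rw [← Ico_union_Ico_eq_Ico hwp hpy, filter_union, ← Nat.card_Ico p y]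
    exact (card_union_le _ _).trans (Nat.add_le_add_left (card_filter_le _ _) _)
  omega

end MedianOrder

section Parameters

/-- The number of consecutive positions of the median order allotted to each vertex that has to be
embedded, where `a` and `b` bound the in-degrees and the out-degrees. The constants are those for
which `mul_pow_blowup_lt` holds. -/
def blowup (a b : ℕ) : ℕ := 2 ^ 12 * b * 2 ^ (4 * a)

/-- A lower bound for the density of edges from a long interval of a median order to a point that
lies only slightly behind it: `1 / 2`, up to an error for which the `2 * a`-th power loses only a
constant factor. -/
noncomputable def density (a : ℕ) : ℝ := 1 / 2 * (1 - 1 / (4 * a))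

variable {a b : ℕ}

lemma blowup_pos (hb : 0 < b) : 0 < blowup a b := by
  unfold blowup
  positivity

lemma blowup_eq : (blowup a b : ℝ) = 2 ^ 12 * b * (4 ^ a) ^ 2 := by
  rw [← pow_mul, show (4 : ℝ) = 2 ^ 2 by norm_num, ← pow_mul, blowup]
  push_cast
  ring

lemma density_nonneg (ha : 0 < a) : 0 ≤ density a := by
  have ha' : (1 : ℝ) ≤ a := mod_cast ha
  have : 1 / (4 * a : ℝ) ≤ 1 := (div_le_one (by positivity)).2 (by linarith)
  rw [density]
  linarith

lemma one_div_le_density_pow (ha : 0 < a) : 1 / (2 * 4 ^ a) ≤ density a ^ (2 * a) := by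
  have ha' : (1 : ℝ) ≤ a := mod_cast ha
  have bernoulli : (1 / 2 : ℝ) ≤ (1 - 1 / (4 * a)) ^ (2 * a) := by
    have hle : 1 / (4 * a : ℝ) ≤ 1 := (div_le_one (by positivity)).2 (by linarith)
    have := one_add_mul_le_pow (a := -(1 / (4 * a : ℝ))) (by linarith) (2 * a)
    rw [← sub_eq_add_neg] at this
    refine le_of_eq_of_le ?_ this
    push_cast
    field_simp
    norm_num
  calc (1 / (2 * 4 ^ a) : ℝ) = (1 / 2) ^ (2 * a) * (1 / 2) := by
        rw [pow_mul, div_pow, div_pow]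
        norm_num
    _ ≤ (1 / 2) ^ (2 * a) * (1 - 1 / (4 * a)) ^ (2 * a) := by gcongr
    _ = density a ^ (2 * a) := (mul_pow _ _ _).symm

lemma mul_pow_blowup_lt {k : ℕ} (ha : 0 < a) (hb : 0 < b) (hk : k ≤ a) :
    4 * (a + 1) * 4 ^ a * (blowup a b * b : ℝ) ^ k < (512 * b * 4 ^ a) ^ (2 * a) := by
  have succ_lt : 4 * (a + 1) < 16 ^ a :=
    calc 4 * (a + 1) < 8 * 2 ^ a := by have := Nat.lt_two_pow_self (n := a); omega
      _ ≤ 8 ^ a * 2 ^ a := Nat.mul_le_mul_right _ (Nat.le_self_pow ha.ne' 8)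
      _ = 16 ^ a := (mul_pow 8 2 a).symm
  have succ_lt' : (4 * (a + 1) : ℝ) < 16 ^ a := mod_cast succ_lt
  have one_le : (1 : ℝ) ≤ blowup a b * b := mod_cast Nat.mul_pos (blowup_pos hb) hb
  calc 4 * (a + 1) * 4 ^ a * (blowup a b * b : ℝ) ^ k
      ≤ 4 * (a + 1) * 4 ^ a * (blowup a b * b : ℝ) ^ a := by gcongr
    _ < 16 ^ a * 4 ^ a * (blowup a b * b : ℝ) ^ a := by gcongr
    _ = (512 * b * 4 ^ a) ^ (2 * a) := by
        rw [← mul_pow, ← mul_pow, pow_mul, blowup_eq]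
        ring

lemma mul_pow_lt_of_mul_density_pow_le {m₀ m₁ k : ℕ} {bad y : ℝ} (ha : 0 < a) (hb : 0 < b)
    (hm₀ : 0 < m₀) (hm₁ : 0 < m₁) (hk : k ≤ a) (hbad : 0 ≤ bad)
    (hy : blowup a b * m₁ ≤ 4 * 4 ^ a * y)
    (h : bad * (density a * y) ^ (2 * a) ≤
      2 * (a + 1) * (blowup a b * m₀ : ℝ) ^ k * (2 * m₁) ^ (2 * a)) :
    bad * b ^ k < (m₀ : ℝ) ^ k := by
  have y_ge : 512 * b * 4 ^ a * (2 * m₁) ≤ y := by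
    rw [blowup_eq] at hy
    refine le_of_mul_le_mul_left ?_ (by positivity : (0 : ℝ) < 4 * 4 ^ a)
    linarith
  have bad_le : bad * (512 * b * 4 ^ a) ^ (2 * a) ≤
      4 * (a + 1) * 4 ^ a * (blowup a b * m₀ : ℝ) ^ k := by
    refine le_of_mul_le_mul_right ?_ (by positivity : (0 : ℝ) < (2 * m₁) ^ (2 * a) / (2 * 4 ^ a))
    calc bad * (512 * b * 4 ^ a) ^ (2 * a) * ((2 * m₁) ^ (2 * a) / (2 * 4 ^ a))
        = bad * (1 / (2 * 4 ^ a) * (512 * b * 4 ^ a * (2 * m₁)) ^ (2 * a)) := by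
          rw [mul_pow _ (2 * m₁ : ℝ)]
          ring
      _ ≤ bad * (density a ^ (2 * a) * y ^ (2 * a)) := by
          have := density_nonneg ha
          gcongr
          exact one_div_le_density_pow ha
      _ ≤ 2 * (a + 1) * (blowup a b * m₀ : ℝ) ^ k * (2 * m₁) ^ (2 * a) := by rwa [← mul_pow]
      _ = _ := by field_simp; ring
  refine lt_of_mul_lt_mul_right ?_ (by positivity : (0 : ℝ) ≤ (512 * b * 4 ^ a) ^ (2 * a))
  calc bad * b ^ k * (512 * b * 4 ^ a) ^ (2 * a)
      = bad * (512 * b * 4 ^ a) ^ (2 * a) * b ^ k := by ring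
    _ ≤ 4 * (a + 1) * 4 ^ a * (blowup a b * m₀ : ℝ) ^ k * b ^ k := by gcongr
    _ = 4 * (a + 1) * 4 ^ a * (blowup a b * b : ℝ) ^ k * m₀ ^ k := by ring
    _ < (512 * b * 4 ^ a) ^ (2 * a) * m₀ ^ k := by
        gcongr
        exact mul_pow_blowup_lt ha hb hk
    _ = _ := mul_comm _ _

end Parameters

section HostBlock

variable {a b : ℕ}

lemma sum_range_sum_Ico_add {M : Type*} [AddCommMonoid M] (f : ℕ → M) (w q s : ℕ) :
    ∑ r ∈ range q, ∑ x ∈ Ico (w + r * s) (w + r * s + s), f x = ∑ x ∈ Ico w (w + q * s), f x := by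
  induction q with
  | zero => simp
  | succ q ih =>
    rw [sum_range_succ, ih, sum_Ico_consecutive _ (by omega) (by omega), add_assoc, ← Nat.succ_mul]

lemma exists_dense_block {β : Type*} {T : ℕ → β → Prop} [∀ x y, Decidable (T x y)] {Y : Finset β}
    {w q s : ℕ} {c : ℝ} (hq : 0 < q)
    (hdense : ∀ y ∈ Y, c * (q * s : ℕ) ≤ #{x ∈ Ico w (w + q * s) | T x y}) :
    ∃ r < q, c * s * #Y ≤ ∑ x ∈ Ico (w + r * s) (w + r * s + s), (#{y ∈ Y | T x y} : ℝ) := by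
  have total : ∑ _r ∈ range q, c * s * #Y ≤
      ∑ r ∈ range q, ∑ x ∈ Ico (w + r * s) (w + r * s + s), (#{y ∈ Y | T x y} : ℝ) :=
    calc ∑ _r ∈ range q, c * s * #Y = ∑ _y ∈ Y, c * (q * s : ℕ) := by
          simp only [sum_const, card_range, nsmul_eq_mul]
          push_cast
          ring
      _ ≤ ∑ y ∈ Y, (#{x ∈ Ico w (w + q * s) | T x y} : ℝ) := sum_le_sum hdense
      _ = ∑ x ∈ Ico w (w + q * s), (#{y ∈ Y | T x y} : ℝ) :=
          mod_cast (sum_card_bipartiteAbove_eq_sum_card_bipartiteBelow T).symm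
      _ = _ := (sum_range_sum_Ico_add _ _ _ _).symm
  simpa using exists_le_of_sum_le (nonempty_range_iff.2 hq.ne') total

lemma IsMedianOrdered.density_mul_le {T : ℕ → ℕ → Prop} [DecidableRel T] {N w h l y : ℕ}
    (hT : IsMedianOrdered T N) (ha : 0 < a) (hl : 4 * a * l ≤ h) (hy : y ∈ Ico (w + h) (w + h + l))
    (hN : w + h + l ≤ N) : density a * h ≤ #{x ∈ Ico w (w + h) | T x y} := by
  rw [mem_Ico] at hy
  have half := hT.sub_le_two_mul_card_add (Nat.le_add_right w h) hy.1 (hy.2.trans_le hN)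
  have half' : (h : ℝ) ≤ 2 * #{x ∈ Ico w (w + h) | T x y} + l := mod_cast by omega
  have hl' : (l : ℝ) ≤ 1 / (4 * a) * h := by
    rw [one_div, inv_mul_eq_div, le_div_iff₀ (by positivity), mul_comm]
    exact_mod_cast hl
  rw [density]
  linarith

lemma exists_mul_between {m₀ : ℕ} (m₁ c : ℕ) (hc : 0 < c) (hm₀ : 0 < m₀) :
    ∃ q, 0 < q ∧ c * m₁ ≤ q * m₀ ∧ q * m₀ ≤ c * (m₀ + m₁) := by
  have lower := Nat.lt_mul_div_succ m₁ hm₀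
  have upper := Nat.mul_div_le m₁ m₀
  refine ⟨c * (m₁ / m₀ + 1), by positivity, ?_, ?_⟩ <;> rw [mul_assoc] <;> gcongr <;> linarith

/-- A dense block `Ico p₀ (p₀ + blowup a b * m₀)` not far before `Y` exists by averaging over the
blocks of a long interval ending at `p`; dependent random choice then applies to it. -/
theorem IsMedianOrdered.exists_block {T : ℕ → ℕ → Prop} [DecidableRel T] {N m₀ m₁ p : ℕ}
    {Y : Finset ℕ} (hT : IsMedianOrdered T N) (ha : 0 < a) (hb : 0 < b) (hm₀ : 0 < m₀)
    (hm₁ : 0 < m₁) (hYp : Y ⊆ Ico p (p + blowup a b * m₁)) (hpN : p + blowup a b * m₁ ≤ N)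
    (hY : blowup a b * m₁ ≤ 4 * 4 ^ a * #Y) (hp : 4 * a * blowup a b * (m₀ + m₁) ≤ p) :
    ∃ p₀, p₀ + blowup a b * m₀ ≤ p ∧ p ≤ p₀ + 4 * a * blowup a b * (m₀ + m₁) ∧
      ∃ A ⊆ Ico p₀ (p₀ + blowup a b * m₀), blowup a b * m₀ ≤ 4 * 4 ^ a * #A ∧
        ∀ k ≤ a, #(badTuples T A Y (2 * m₁) (Fin k)) * b ^ k < m₀ ^ k := by
  have hR : 0 < blowup a b := blowup_pos hb
  obtain ⟨q, hq, q_ge, q_le⟩ := exists_mul_between m₁ (4 * a) (by positivity) hm₀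
  set s := blowup a b * m₀ with hs
  have hs₀ : 0 < s := Nat.mul_pos hR hm₀
  have qs_ge : 4 * a * (blowup a b * m₁) ≤ q * s := by
    have := Nat.mul_le_mul_left (blowup a b) q_ge
    rw [hs]
    linarith
  have qs_le : q * s ≤ 4 * a * blowup a b * (m₀ + m₁) := by
    have := Nat.mul_le_mul_left (blowup a b) q_le
    rw [hs]
    linarith
  obtain ⟨w, rfl⟩ := Nat.exists_eq_add_of_le' (qs_le.trans hp)
  obtain ⟨r, hr, dense⟩ := exists_dense_block hq fun y hy =>
    hT.density_mul_le ha qs_ge (hYp hy) hpN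
  have hY₀ : Y.Nonempty := card_pos.1 <| Nat.pos_of_mul_pos_left <|
    (Nat.mul_pos hR hm₁).trans_le hY
  obtain ⟨A, hA, card_A, bad_A⟩ := exists_subset_card_badTuples_le T (b := 2 * m₁)
    (density_nonneg ha) (nonempty_Ico.2 (Nat.lt_add_of_pos_right hs₀)) hY₀ (by positivity)
    (by simpa using dense) (2 * a) a
  simp only [Nat.card_Ico, add_tsub_cancel_left] at card_A bad_A
  have block_le : r * s + s ≤ q * s := by
    rw [← Nat.succ_mul]
    exact Nat.mul_le_mul_right _ hr
  refine ⟨w + r * s, by omega, by omega, A, hA, ?_, fun k hk => ?_⟩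
  · have : (s : ℝ) * (1 / (2 * 4 ^ a)) ≤ 2 * #A := by
      have : (s : ℝ) * (1 / (2 * 4 ^ a)) ≤ s * density a ^ (2 * a) := by
        gcongr
        exact one_div_le_density_pow ha
      linarith
    rw [mul_one_div, div_le_iff₀ (by positivity)] at this
    have : (s : ℝ) ≤ 4 * 4 ^ a * #A := by linarith
    exact_mod_cast this
  · have := mul_pow_lt_of_mul_density_pow_le (bad := #(badTuples T A Y (2 * m₁) (Fin k)))
      (y := #Y) ha hb hm₀ hm₁ hk (by positivity) (mod_cast hY)
      (by simpa [hs] using bad_A k hk)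
    exact_mod_cast this

end HostBlock

section HostChain

variable {T : ℕ → ℕ → Prop} [DecidableRel T] {N a b : ℕ}

/-- Hosts `A 0, …, A H` inside the positions `[p, N)`, listed from left to right, for a graded
digraph with `m i` vertices in level `i`: a level of the digraph can be embedded greedily into its
host as long as its tuples of in-neighbours avoid the few bad tuples of the preceding host. -/
structure IsHostChain (T : ℕ → ℕ → Prop) [DecidableRel T] (a b : ℕ) (m : ℕ → ℕ) (H p N : ℕ)
    (A : ℕ → Finset ℕ) : Prop where
  zero_subset : A 0 ⊆ Ico p (p + blowup a b * m 0)
  zero_large : blowup a b * m 0 ≤ 4 * 4 ^ a * #(A 0)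
  subset : ∀ i ≤ H, A i ⊆ Ico p N
  disjoint : ∀ i j, i < j → j ≤ H → Disjoint (A i) (A j)
  few_bad : ∀ i < H, ∀ k ≤ a,
    #(badTuples T (A i) (A (i + 1)) (2 * m (i + 1)) (Fin k)) * b ^ k < m i ^ k

namespace IsHostChain

variable {m : ℕ → ℕ} {H p : ℕ} {A : ℕ → Finset ℕ}

lemma two_mul_le_card_zero (hA : IsHostChain T a b m H p N A) (hb : 0 < b) :
    2 * m 0 ≤ #(A 0) := by
  have blowup_ge : 4 * 4 ^ a * 2 ≤ blowup a b := by
    rw [blowup, show 4 ^ a = 2 ^ (2 * a) by rw [pow_mul]; rfl]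
    calc 4 * 2 ^ (2 * a) * 2 = 2 ^ 3 * 1 * 2 ^ (2 * a) := by ring
      _ ≤ 2 ^ 12 * b * 2 ^ (4 * a) := by gcongr <;> omega
  refine Nat.le_of_mul_le_mul_left ?_ (by positivity : 0 < 4 * 4 ^ a)
  calc 4 * 4 ^ a * (2 * m 0) = 4 * 4 ^ a * 2 * m 0 := (mul_assoc _ _ _).symm
    _ ≤ blowup a b * m 0 := Nat.mul_le_mul_right _ blowup_ge
    _ ≤ _ := hA.zero_large

lemma cons {A₀ : Finset ℕ} {p₀ : ℕ} (hA : IsHostChain T a b (fun i => m (i + 1)) H p N A)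
    (hpN : p ≤ N) (hp : p₀ + blowup a b * m 0 ≤ p) (hA₀ : A₀ ⊆ Ico p₀ (p₀ + blowup a b * m 0))
    (zero_large : blowup a b * m 0 ≤ 4 * 4 ^ a * #A₀)
    (few_bad : ∀ k ≤ a, #(badTuples T A₀ (A 0) (2 * m 1) (Fin k)) * b ^ k < m 0 ^ k) :
    IsHostChain T a b m (H + 1) p₀ N (fun | 0 => A₀ | i + 1 => A i) where
  zero_subset := hA₀
  zero_large := zero_large
  subset
    | 0, _ => hA₀.trans (Ico_subset_Ico_right (hp.trans hpN))
    | i + 1, hi => (hA.subset i (Nat.le_of_succ_le_succ hi)).trans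
        (Ico_subset_Ico_left (le_of_add_le_left hp))
  disjoint
    | 0, j + 1, _, hj => (Ico_disjoint_Ico_consecutive p₀ p N).mono
        (hA₀.trans (Ico_subset_Ico_right hp)) (hA.subset j (Nat.le_of_succ_le_succ hj))
    | i + 1, j + 1, hij, hj =>
        hA.disjoint i j (Nat.lt_of_succ_lt_succ hij) (Nat.le_of_succ_le_succ hj)
  few_bad
    | 0, _ => few_bad
    | i + 1, hi => hA.few_bad i (Nat.lt_of_succ_lt_succ hi)

end IsHostChain

theorem exists_isHostChain (hT : IsMedianOrdered T N) (ha : 0 < a) (hb : 0 < b) {m : ℕ → ℕ}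
    {H : ℕ} (hm : ∀ i ≤ H, 0 < m i)
    (hN : 2 * (4 * a * blowup a b) * ∑ i ∈ range (H + 1), m i ≤ N) :
    ∃ A p, p + blowup a b * m 0 ≤ N ∧ N + 4 * a * blowup a b * m 0 ≤
        p + 2 * (4 * a * blowup a b) * ∑ i ∈ range (H + 1), m i ∧
      IsHostChain T a b m H p N A := by
  induction H generalizing m with
  | zero =>
    rw [zero_add, sum_range_one, mul_assoc 2] at hN ⊢
    have : blowup a b * m 0 ≤ 4 * a * blowup a b * m 0 := by
      rw [mul_assoc (4 * a)]
      exact Nat.le_mul_of_pos_left _ (by positivity)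
    obtain ⟨p, rfl⟩ := Nat.exists_eq_add_of_le' (this.trans (by omega : _ ≤ N))
    refine ⟨fun _ => Ico p (p + blowup a b * m 0), p, le_rfl, by omega, subset_rfl, ?_,
      fun _ _ => subset_rfl, by omega, by omega⟩
    rw [Nat.card_Ico, add_tsub_cancel_left]
    exact Nat.le_mul_of_pos_left _ (by positivity)
  | succ H ih =>
    rw [sum_range_succ', mul_add] at hN ⊢
    obtain ⟨A, p, hpN, hNp, hA⟩ := ih (m := fun i => m (i + 1))
      (fun i hi => hm (i + 1) (Nat.succ_le_succ hi)) (by omega)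
    have room : 4 * a * blowup a b * (m 0 + m 1) ≤ p := by
      rw [mul_assoc 2 _ (m 0)] at hN
      rw [mul_add]
      simp only [zero_add] at hNp
      omega
    obtain ⟨p₀, hp₀, hp, A₀, hA₀, large, bad⟩ := hT.exists_block ha hb (hm 0 (Nat.zero_le _))
      (hm 1 (Nat.succ_le_succ (Nat.zero_le _))) hA.zero_subset hpN hA.zero_large room
    have hpN' : p ≤ N := le_of_add_le_left hpN
    refine ⟨_, p₀, hp₀.trans hpN', ?_, hA.cons hpN' hp₀ hA₀ large bad⟩
    rw [mul_add] at hp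
    rw [mul_assoc 2 _ (m 0)]
    simp only [zero_add] at hNp
    omega

end HostChain

section Grading

lemma exists_grading_forall_level_nonempty {V : Type*} [Finite V] [Nonempty V] {D : Digraph V}
    {f : V → ℕ} (hf : ∀ u v, D.Adj u v → f v = f u + 1) :
    ∃ (g : V → ℕ) (H : ℕ), (∀ u v, D.Adj u v → g v = g u + 1) ∧ (∀ v, g v ≤ H) ∧
      ∀ i ≤ H, ∃ v, g v = i := by
  classical
  let P (i : ℕ) : Prop := ∃ u, f u = i
  have finite : {i | P i}.Finite := Set.finite_range f
  have card_pos : 0 < #finite.toFinset :=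
    Finset.card_pos.2 ⟨f (Classical.arbitrary V), finite.mem_toFinset.2 ⟨_, rfl⟩⟩
  refine ⟨fun v => Nat.count P (f v), #finite.toFinset - 1, fun u v huv => ?_, fun v => ?_,
    fun i hi => ?_⟩
  · simp only [hf u v huv]
    rw [Nat.count_succ, if_pos ⟨u, rfl⟩]
  · exact Nat.le_sub_one_of_lt (Nat.count_lt_card finite ⟨v, rfl⟩)
  · have hlt : i < #finite.toFinset := by omega
    obtain ⟨v, hv⟩ := Nat.nth_mem_of_lt_card finite hlt
    exact ⟨v, (congrArg (Nat.count P) hv).trans (Nat.count_nth_of_lt_card_finite finite hlt)⟩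

variable {V : Type*} [Fintype V]

/-- The vertices of grade `i`. -/
def level (g : V → ℕ) (i : ℕ) : Finset V := {v | g v = i}

variable {g : V → ℕ} {v : V} {i : ℕ}

lemma mem_level : v ∈ level g i ↔ g v = i := mem_filter_univ v

lemma sum_card_level {H : ℕ} (hg : ∀ v, g v ≤ H) :
    ∑ i ∈ range (H + 1), #(level g i) = Fintype.card V :=
  (card_eq_sum_card_fiberwise fun v _ => mem_range_succ_iff.2 (hg v)).symm

end Grading

section Embedding

variable {V α : Type*} [Fintype V] {D : Digraph V} [DecidableRel D.Adj] {T : α → α → Prop}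
  [DecidableRel T] {g : V → ℕ} {a b i : ℕ}

lemma exists_level_map [Nonempty α] (hg : ∀ u v, D.Adj u v → g v = g u + 1) (hb : 0 < b)
    (hout : ∀ v, #{w | D.Adj v w} ≤ b) {A Y : Finset α} {r : ℕ}
    {C : V → Finset α} (hCA : ∀ v ∈ level g i, C v ⊆ A)
    (hC : ∀ v ∈ level g i, 2 * #(level g i) ≤ #(C v))
    (few_bad : ∀ w ∈ level g (i + 1), #(badTuples T A Y r (Fin #{u | D.Adj u w})) *
      b ^ #{u | D.Adj u w} < #(level g i) ^ #{u | D.Adj u w}) :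
    ∃ ψ : V → α, (∀ v ∈ level g i, ψ v ∈ C v) ∧ Set.InjOn ψ (level g i) ∧
      ∀ w ∈ level g (i + 1), r ≤ #{y ∈ Y | ∀ u, D.Adj u w → T (ψ u) y} := by
  classical
  have adj_level {u w : V} (hw : w ∈ level g (i + 1)) (huw : D.Adj u w) : u ∈ level g i := by
    rw [mem_level] at hw ⊢
    exact Nat.succ_injective ((hg u w huw).symm.trans hw)
  obtain ⟨ψ, hψC, hψinj, hψ⟩ := exists_injOn_forall_notMem (L := level g i) (C := C)
    (Ws := level g (i + 1)) (ι := fun w => {u // D.Adj u w}) (e := fun _ u => u)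
    (B := fun w => badTuples T A Y r {u // D.Adj u w}) hb le_rfl hC
    (fun _ _ => Subtype.val_injective) (fun w hw u => adj_level hw u.2)
    (fun v _ => (card_le_card fun w hw => by
      obtain ⟨-, u, rfl⟩ := mem_filter.1 hw
      simpa using u.2).trans (hout v))
    (fun w hw => by
      rw [Fintype.card_subtype, card_badTuples_congr T
        (Fintype.equivFinOfCardEq (Fintype.card_subtype fun u => D.Adj u w))]
      exact few_bad w hw)
  refine ⟨ψ, hψC, hψinj, fun w hw => ?_⟩
  have tuple_mem : (fun u : {u // D.Adj u w} => ψ u) ∈ Fintype.piFinset fun _ => A :=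
    Fintype.mem_piFinset.2 fun u => hCA _ (adj_level hw u.2) (hψC _ (adj_level hw u.2))
  have not_bad := hψ w hw
  simpa only [badTuples, mem_filter, tuple_mem, true_and, not_lt, Subtype.forall] using not_bad

/-- An embedding of the levels below `i` into their hosts that leaves enough room for each vertex
of level `i`; the values of `φ` on the other levels are irrelevant. -/
structure IsPartialEmbedding (D : Digraph V) [DecidableRel D.Adj] (T : α → α → Prop)
    [DecidableRel T] (g : V → ℕ) (A : ℕ → Finset α) (i : ℕ) (φ : V → α) : Prop where
  mem : ∀ v, g v < i → φ v ∈ A (g v)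
  injOn : ∀ j < i, Set.InjOn φ (level g j)
  adj : ∀ u v, D.Adj u v → g v < i → T (φ u) (φ v)
  room : ∀ w ∈ level g i, 2 * #(level g i) ≤ #{y ∈ A i | ∀ u, D.Adj u w → T (φ u) y}

variable {A : ℕ → Finset α}

lemma isPartialEmbedding_zero (hg : ∀ u v, D.Adj u v → g v = g u + 1)
    (hA : 2 * #(level g 0) ≤ #(A 0)) (φ : V → α) : IsPartialEmbedding D T g A 0 φ where
  mem := by simp
  injOn := by simp
  adj := by simp
  room w hw := by
    have no_adj (u : V) : ¬ D.Adj u w := fun huw => by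
      rw [mem_level, hg u w huw] at hw
      exact Nat.succ_ne_zero _ hw
    simpa [no_adj] using hA

lemma IsPartialEmbedding.exists_succ [Nonempty α] {φ : V → α}
    (hφ : IsPartialEmbedding D T g A i φ) (hg : ∀ u v, D.Adj u v → g v = g u + 1) (hb : 0 < b)
    (hout : ∀ v, #{w | D.Adj v w} ≤ b)
    (few_bad : ∀ w ∈ level g (i + 1),
      #(badTuples T (A i) (A (i + 1)) (2 * #(level g (i + 1))) (Fin #{u | D.Adj u w})) *
        b ^ #{u | D.Adj u w} < #(level g i) ^ #{u | D.Adj u w}) :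
    ∃ φ', IsPartialEmbedding D T g A (i + 1) φ' := by
  obtain ⟨ψ, hψC, hψinj, hψroom⟩ := exists_level_map hg hb hout
    (fun _ _ => filter_subset _ _) hφ.room few_bad
  simp only [mem_filter, mem_level] at hψC
  let φ' (v : V) : α := if g v = i then ψ v else φ v
  have φ'_eq {v : V} (hv : g v = i) : φ' v = ψ v := if_pos hv
  have φ'_of_lt {v : V} (hv : g v < i) : φ' v = φ v := if_neg hv.ne
  refine ⟨φ', fun v hv => ?_, fun j hj => ?_, fun u v huv hv => ?_, fun w hw => ?_⟩
  · obtain hv | hv := Nat.lt_succ_iff_lt_or_eq.1 hv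
    · exact φ'_of_lt hv ▸ hφ.mem v hv
    · rw [φ'_eq hv, hv]
      exact (hψC v hv).1
  · obtain hj | rfl := Nat.lt_succ_iff_lt_or_eq.1 hj
    · exact (hφ.injOn j hj).congr fun v hv => (φ'_of_lt (by rwa [mem_level.1 hv])).symm
    · exact hψinj.congr fun v hv => (φ'_eq (mem_level.1 hv)).symm
  · have hu : g u < i := by have := hg u v huv; omega
    obtain hv | hv := Nat.lt_succ_iff_lt_or_eq.1 hv
    · rw [φ'_of_lt hu, φ'_of_lt hv]
      exact hφ.adj u v huv hv
    · rw [φ'_of_lt hu, φ'_eq hv]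
      exact (hψC v hv).2 u huv
  · refine (hψroom w hw).trans_eq ?_
    congr! 4 with y - u huw
    rw [φ'_eq (Nat.succ_injective ((hg u w huw).symm.trans (mem_level.1 hw)))]

theorem IsHostChain.exists_injective {T : ℕ → ℕ → Prop} [DecidableRel T] {A : ℕ → Finset ℕ}
    {H p N : ℕ} (hA : IsHostChain T a b (fun i => #(level g i)) H p N A)
    (hg : ∀ u v, D.Adj u v → g v = g u + 1) (hgH : ∀ v, g v ≤ H) (hb : 0 < b)
    (hin : ∀ v, #{u | D.Adj u v} ≤ a) (hout : ∀ v, #{w | D.Adj v w} ≤ b) :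
    ∃ φ : V → ℕ, φ.Injective ∧ (∀ v, φ v < N) ∧ ∀ u v, D.Adj u v → T (φ u) (φ v) := by
  have partial_embedding : ∀ i, ∃ φ, IsPartialEmbedding D T g A i φ := by
    intro i
    induction i with
    | zero =>
      exact ⟨fun _ => 0, isPartialEmbedding_zero hg (hA.two_mul_le_card_zero hb) _⟩
    | succ i ih =>
      obtain ⟨φ, hφ⟩ := ih
      refine hφ.exists_succ hg hb hout fun w hw => hA.few_bad i ?_ _ (hin w)
      exact Nat.lt_of_succ_le ((mem_level.1 hw).symm.trans_le (hgH w))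
  obtain ⟨φ, hφ⟩ := partial_embedding (H + 1)
  have lt_succ (v : V) : g v < H + 1 := Nat.lt_succ_of_le (hgH v)
  have mem (v : V) : φ v ∈ A (g v) := hφ.mem v (lt_succ v)
  have level_eq {u v : V} (huv : φ u = φ v) : g u = g v := by
    by_contra hne
    wlog hlt : g u < g v generalizing u v
    · exact this huv.symm (Ne.symm hne) (by omega)
    exact disjoint_left.1 (hA.disjoint _ _ hlt (hgH v)) (mem u) (huv ▸ mem v)
  refine ⟨φ, fun u v huv => ?_, fun v => (mem_Ico.1 (hA.subset _ (hgH v) (mem v))).2,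
    fun u v huv => hφ.adj u v huv (lt_succ v)⟩
  exact hφ.injOn _ (lt_succ v) (mem_level.2 (level_eq huv)) (mem_level.2 rfl) huv

end Embedding

section Ramsey

variable {V : Type*} [Fintype V] {D : Digraph V} {f : V → ℕ} {a b : ℕ}

theorem containsCopy_of_graded [DecidableRel D.Adj]
    (hf : ∀ u v, D.Adj u v → f v = f u + 1) (ha : 0 < a) (hb : 0 < b)
    (hin : ∀ v, #{u | D.Adj u v} ≤ a) (hout : ∀ v, #{w | D.Adj v w} ≤ b) {W : Type*} [Fintype W]
    {T : Digraph W} (hT : T.IsTournament)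
    (hW : 2 ^ 15 * a * b * 2 ^ (4 * a) * Fintype.card V ≤ Fintype.card W) : T.ContainsCopy D := by
  classical
  cases isEmpty_or_nonempty V
  · exact ⟨isEmptyElim, Function.injective_of_subsingleton _, isEmptyElim⟩
  obtain ⟨g, H, hg, hgH, level_nonempty⟩ := exists_grading_forall_level_nonempty hf
  have : Nonempty W := Fintype.card_pos_iff.1 (hW.trans_lt' (by positivity))
  obtain ⟨σ, σ_injOn, σ_median⟩ := exists_isMedianOrdered hT
  have level_pos : ∀ i ≤ H, 0 < #(level g i) := fun i hi =>
    card_pos.2 ((level_nonempty i hi).imp fun _ => mem_level.2)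
  have enough_room :
      2 * (4 * a * blowup a b) * ∑ i ∈ range (H + 1), #(level g i) ≤ Fintype.card W := by
    rw [sum_card_level hgH, blowup]
    refine hW.trans_eq' ?_
    ring
  obtain ⟨A, p, -, -, hA⟩ := exists_isHostChain σ_median ha hb level_pos enough_room
  obtain ⟨φ, φ_inj, φ_lt, φ_adj⟩ := hA.exists_injective hg hgH hb hin hout
  exact ⟨σ ∘ φ, fun u v huv => φ_inj (σ_injOn (φ_lt u) (φ_lt v) huv), φ_adj⟩

lemma card_inNeighbors_le_degree [DecidableRel D.Adj] (v : V) :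
    #{u | D.Adj u v} ≤ D.degree v := by
  rw [Digraph.degree, Nat.card_eq_card_toFinset]
  exact card_le_card fun u hu => by simpa using .inr ((mem_filter_univ u).1 hu)

lemma card_outNeighbors_le_degree [DecidableRel D.Adj] (v : V) :
    #{w | D.Adj v w} ≤ D.degree v := by
  rw [Digraph.degree, Nat.card_eq_card_toFinset]
  exact card_le_card fun w hw => by simpa using .inl ((mem_filter_univ w).1 hw)

end Ramsey

end GradedRamsey

open Finset GradedRamsey in
theorem graded_oriented_ramsey_upper_general {V : Type*} [Fintype V] {D : Digraph V}
    [DecidableRel D.Adj] {a b : ℕ} (hgraded : ∃ f : V → ℕ, ∀ u v, D.Adj u v → f v = f u + 1)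
    (ha : 0 < a) (hb : 0 < b) (hin : ∀ v, #{u | D.Adj u v} ≤ a)
    (hout : ∀ v, #{w | D.Adj v w} ≤ b) :
    orientedRamsey D ≤ 2 ^ 15 * a * b * 2 ^ (4 * a) * Fintype.card V :=
  let ⟨_, hf⟩ := hgraded
  Nat.sInf_le fun _ hT => containsCopy_of_graded hf ha hb hin hout hT (Fintype.card_fin _).ge

/-- If `D` is a graded digraph on `n` vertices with at least one edge and
maximum degree `Δ`, then `r⃗(D) ≤ 10⁹ · Δ³ · 2^(4Δ) · n`. -/
theorem graded_oriented_ramsey_upper {V : Type} [Fintype V] (D : Digraph V) (n Δ : ℕ)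
    (hn : Fintype.card V = n)
    (hgraded : ∃ f : V → ℕ, ∀ u v : V, D.Adj u v → f v = f u + 1)
    (hedge : ∃ u v : V, D.Adj u v)
    (hdeg : ∀ v : V, D.degree v ≤ Δ) :
    orientedRamsey D ≤ 10 ^ 9 * Δ ^ 3 * 2 ^ (4 * Δ) * n := by
  classical
  obtain ⟨u, v, huv⟩ := hedge
  have hΔ : 0 < Δ := (Finset.card_pos.2 ⟨u, by simpa using huv⟩).trans_le
    ((GradedRamsey.card_inNeighbors_le_degree v).trans (hdeg v))
  calc orientedRamsey D
      ≤ 2 ^ 15 * Δ * Δ * 2 ^ (4 * Δ) * Fintype.card V :=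
        graded_oriented_ramsey_upper_general hgraded hΔ hΔ
          (fun w => (GradedRamsey.card_inNeighbors_le_degree w).trans (hdeg w))
          (fun w => (GradedRamsey.card_outNeighbors_le_degree w).trans (hdeg w))
    _ = 32768 * Δ ^ 2 * 2 ^ (4 * Δ) * n := by rw [hn]; ring
    _ ≤ 10 ^ 9 * Δ ^ 3 * 2 ^ (4 * Δ) * n := by gcongr <;> norm_num
end

section
/- Let D be a graded digraph on n vertices that has at least one edge, with maximum in-degree Δ⁻ and maximum out-degree Δ⁺. Then the oriented Ramsey number of D satisfies r⃗(D) ≤ 10⁹ · Δ⁺ · (Δ⁻)² · 2^(4Δ⁻) · n. -/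
/-- The in-degree of a vertex of a digraph. -/
noncomputable def Digraph.inDegree {V : Type*} (G : Digraph V) (v : V) : ℕ :=
  Nat.card {u : V | G.Adj u v}

/-- The out-degree of a vertex of a digraph. -/
noncomputable def Digraph.outDegree {V : Type*} (G : Digraph V) (v : V) : ℕ :=
  Nat.card {u : V | G.Adj v u}

/-!
Order the tournament by a median order: every vertex then receives edges from at least half of each
interval ending just before it, so a set `B` of consecutive vertices has, among the slightly longer
intervals before it, a window of any prescribed length with edge density almost `1 / 2` into `B`.
Dependent random choice in that window gives a set `A`, of size a fixed proportion of the window,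
in which few `Δ⁻`-tuples have few common out-neighbours in `B`.

The levels of the digraph are embedded from the last to the first, each in the set `A` found before
the set `B` that is to contain the next one. While the vertices of a level are placed one by one,
the images of the in-neighbourhood of each vertex of the next level stay extendable to many good
`Δ⁻`-tuples; so in the end they have many common out-neighbours in `B`, and these become the
candidates for that vertex. Window lengths are proportional to the sizes of the levels, so the total
length used telescopes to a multiple of `n`.
-/

open Finset Function

section MedianOrder

/-- The number of pairs of positions `i < j` of a list with `r lᵢ lⱼ`; a median order of a
tournament maximises it. -/
def forwardCount {α : Type*} (r : α → α → Prop) [DecidableRel r] : List α → ℕ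
  | [] => 0
  | x :: l => l.countP (r x ·) + forwardCount r l

/-- The feedback property of a median order `0, 1, …, N - 1`: every vertex receives edges from
at least half of each interval that ends just before it. -/
def HasFeedbackProperty (r : ℕ → ℕ → Prop) (N : ℕ) : Prop :=
  open scoped Classical in
  ∀ a c, a ≤ c → c < N → c - a ≤ 2 * #{b ∈ Ico a c | r b c}

theorem forwardCount_append_cons {α : Type*} (r : α → α → Prop) [DecidableRel r]
    (l₁ l₂ : List α) (v : α) :
    forwardCount r (l₁ ++ v :: l₂) =
      forwardCount r (l₁ ++ l₂) + l₁.countP (r · v) + l₂.countP (r v ·) := by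
  induction l₁ with
  | nil => simp [forwardCount, add_comm]
  | cons x l ih =>
    simp only [List.cons_append, forwardCount, List.countP_append, List.countP_cons, ih]
    omega

theorem exists_perm_countP_le_countP {α : Type*} (r : α → α → Prop) [DecidableRel r]
    (l₀ : List α) :
    ∃ l, l.Perm l₀ ∧ ∀ l₁ l₂ l₃ v, l = l₁ ++ l₂ ++ v :: l₃ →
      l₂.countP (r v ·) ≤ l₂.countP (r · v) := by
  have hfinite : {l : List α | l.Perm l₀}.Finite := by
    simpa only [List.mem_permutations] using l₀.permutations.finite_toSet
  obtain ⟨l, hl, hmax⟩ := Set.exists_max_image _ (forwardCount r) hfinite ⟨l₀, .refl l₀⟩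
  refine ⟨l, hl, ?_⟩
  rintro l₁ l₂ l₃ v rfl
  have hmove : (l₁ ++ v :: (l₂ ++ l₃)).Perm (l₁ ++ l₂ ++ v :: l₃) := by
    simpa using (List.perm_middle (a := v) (l₁ := l₂) (l₂ := l₃)).symm.append_left l₁
  have hle := hmax _ (hmove.trans hl)
  simp only [forwardCount_append_cons, List.countP_append, ← List.append_assoc] at hle
  omega

theorem exists_hasFeedbackProperty {W : Type*} [Fintype W] [Nonempty W] {r : W → W → Prop}
    (hr : ∀ u v, u ≠ v → ¬ r u v → r v u) :
    ∃ σ : ℕ → W, Set.InjOn σ (Set.Iio (Fintype.card W)) ∧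
      HasFeedbackProperty (r on σ) (Fintype.card W) := by
  classical
  obtain ⟨l, hl, hmedian⟩ := exists_perm_countP_le_countP r (univ : Finset W).toList
  have hlength : l.length = Fintype.card W := by rw [hl.length_eq, length_toList, card_univ]
  have hnodup : l.Nodup := hl.nodup_iff.2 (nodup_toList _)
  let σ : ℕ → W := fun i => l.getD i (Classical.arbitrary W)
  have hσ : ∀ {i} (hi : i < l.length), σ i = l[i] := fun hi => List.getD_eq_getElem _ _ hi
  have hinj : Set.InjOn σ (Set.Iio (Fintype.card W)) := by
    intro i hi j hj hij
    rw [← hlength, Set.mem_Iio] at hi hj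
    rwa [hσ hi, hσ hj, hnodup.getElem_inj_iff] at hij
  refine ⟨σ, hinj, fun a c hac hc => ?_⟩
  have hsplit : l = (List.Ico 0 a).map σ ++ (List.Ico a c).map σ ++
      σ c :: (List.Ico (c + 1) (Fintype.card W)).map σ := by
    rw [← List.map_append, List.Ico.append_consecutive (Nat.zero_le a) hac, ← List.map_cons,
      ← List.Ico.eq_cons hc, ← List.map_append, List.Ico.append_consecutive (Nat.zero_le c) hc.le,
      List.Ico.zero_bot]
    exact List.ext_getElem (by simp [hlength]) fun i hi _ => by simp [hσ hi]
  have hhalf := hmedian _ _ _ _ hsplit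
  have htotal : (List.Ico a c).countP (fun b => decide ¬ (decide (r (σ b) (σ c)) = true)) ≤
      (List.Ico a c).countP (fun b => r (σ c) (σ b)) := by
    refine List.countP_mono_left fun b hb h => ?_
    have hbc := (List.Ico.mem.1 hb).2
    simp only [decide_eq_true_eq] at h ⊢
    exact hr _ _ (fun h' => hbc.ne (hinj (hbc.trans hc) hc h')) h
  have hlen := List.length_eq_countP_add_countP (fun b => decide (r (σ b) (σ c)))
    (l := List.Ico a c)
  have hcard : #{b ∈ Ico a c | (r on σ) b c} = (List.Ico a c).countP fun b => r (σ b) (σ c) := by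
    rw [List.countP_eq_length_filter]
    rfl
  rw [List.Ico.length] at hlen
  rw [List.countP_map, List.countP_map] at hhalf
  simp only [Function.comp_def] at hhalf
  omega

end MedianOrder

section DependentRandomChoice

variable {α β : Type*} {r : α → β → Prop} {A U : Finset α} {B : Finset β}

open Classical in
/-- The common out-neighbourhood of `S` in `B`. -/
noncomputable def commonNbrs (r : α → β → Prop) (B : Finset β) (S : Set α) : Finset β :=
  {b ∈ B | ∀ a ∈ S, r a b}

open Classical in
/-- The `j`-tuples in `A` that, together with `S`, have fewer than `θ` common out-neighbours
in `B`. -/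
noncomputable def badExtensions (r : α → β → Prop) (A : Finset α) (B : Finset β) (θ : ℝ)
    (S : Set α) (j : ℕ) : Finset (Fin j → α) :=
  {t ∈ Fintype.piFinset fun _ : Fin j => A | (#(commonNbrs r B (S ∪ Set.range t)) : ℝ) < θ}

theorem mem_commonNbrs {S : Set α} {b : β} :
    b ∈ commonNbrs r B S ↔ b ∈ B ∧ ∀ a ∈ S, r a b := by
  classical exact mem_filter

theorem commonNbrs_subset {S : Set α} : commonNbrs r B S ⊆ B :=
  fun _ hb => (mem_commonNbrs.1 hb).1

theorem mem_badExtensions {θ : ℝ} {S : Set α} {j : ℕ} {t : Fin j → α} :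
    t ∈ badExtensions r A B θ S j ↔
      (∀ i, t i ∈ A) ∧ (#(commonNbrs r B (S ∪ Set.range t)) : ℝ) < θ := by
  rw [badExtensions, mem_filter, Fintype.mem_piFinset]

theorem badExtensions_eq_empty {θ : ℝ} (hθ : θ ≤ 0) {S : Set α} {j : ℕ} :
    badExtensions r A B θ S j = ∅ :=
  filter_eq_empty_iff.2 fun _ _ => (hθ.trans (Nat.cast_nonneg _)).not_gt

theorem commonNbrs_anti {S S' : Set α} (h : S ⊆ S') : commonNbrs r B S' ⊆ commonNbrs r B S :=
  fun _ hb => mem_commonNbrs.2 ((mem_commonNbrs.1 hb).imp_right fun hb a ha => hb a (h ha))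

theorem sum_card_commonNbrs_range_eq_sum_card_pow (r : α → β → Prop) (U : Finset α) (B : Finset β)
    (s : ℕ) :
    ∑ t ∈ Fintype.piFinset (fun _ : Fin s => B), #(commonNbrs (flip r) U (Set.range t)) =
      ∑ u ∈ U, #(commonNbrs r B {u}) ^ s := by
  classical
  have hcount (u : α) : #(commonNbrs r B {u}) ^ s =
      #{t ∈ Fintype.piFinset (fun _ : Fin s => B) | ∀ j, r u (t j)} := by
    rw [← Fintype.card_piFinset_const]
    congr 1
    ext t
    simp only [Fintype.mem_piFinset, mem_commonNbrs, Set.mem_singleton_iff, forall_eq,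
      mem_filter, forall_and]
  simp only [hcount]
  convert sum_card_bipartiteAbove_eq_sum_card_bipartiteBelow
    (fun (t : Fin s → β) u => ∀ j, r u (t j)) (s := Fintype.piFinset fun _ => B) (t := U) using 3
  · ext u
    simp only [mem_commonNbrs, Set.forall_mem_range, flip, mem_bipartiteAbove]
  · rfl

theorem card_mul_pow_le_sum_pow {ι : Type*} {S : Finset ι} {f : ι → ℝ} {y : ℝ} (hy : 0 ≤ y)
    (hf : ∀ i ∈ S, 0 ≤ f i) (h : #S * y ≤ ∑ i ∈ S, f i) (k : ℕ) :
    #S * y ^ k ≤ ∑ i ∈ S, f i ^ k := by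
  rcases S.eq_empty_or_nonempty with rfl | hS
  · simp
  rcases k with _ | k
  · simp
  have : (0 : ℝ) < #S := by exact_mod_cast hS.card_pos
  calc #S * y ^ (k + 1) = (#S * y) ^ (k + 1) / #S ^ k := by
        field_simp
        ring
    _ ≤ (∑ i ∈ S, f i) ^ (k + 1) / #S ^ k := by gcongr
    _ ≤ ∑ i ∈ S, f i ^ (k + 1) := pow_sum_div_card_le_sum_pow hf k

theorem card_pow_mul_le_sum_card_commonNbrs {d : ℝ} (hd : 0 ≤ d)
    (hdense : d * #U * #B ≤ ∑ u ∈ U, (#(commonNbrs r B {u}) : ℝ)) (s : ℕ) :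
    (#B : ℝ) ^ s * (d ^ s * #U) ≤
      ∑ t ∈ Fintype.piFinset (fun _ : Fin s => B),
        (#(commonNbrs (flip r) U (Set.range t)) : ℝ) := by
  calc (#B : ℝ) ^ s * (d ^ s * #U) = #U * (d * #B) ^ s := by ring
    _ ≤ ∑ u ∈ U, (#(commonNbrs r B {u}) : ℝ) ^ s :=
      card_mul_pow_le_sum_pow (by positivity) (fun _ _ => by positivity) (by linarith) s
    _ = _ := by exact_mod_cast (sum_card_commonNbrs_range_eq_sum_card_pow r U B s).symm

theorem sum_card_badExtensions_commonNbrs_le {θ : ℝ} (hθ : 0 ≤ θ) (k s : ℕ) :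
    ∑ t ∈ Fintype.piFinset (fun _ : Fin s => B),
        (#(badExtensions r (commonNbrs (flip r) U (Set.range t)) B θ ∅ k) : ℝ) ≤
      #U ^ k * θ ^ s := by
  let ρ (z : Fin k → α) (b : β) : Prop := ∀ i, r (z i) b
  have hfilter (t : Fin s → β) : badExtensions r (commonNbrs (flip r) U (Set.range t)) B θ ∅ k =
      commonNbrs (flip ρ) (badExtensions r U B θ ∅ k) (Set.range t) := by
    ext z
    simp only [mem_badExtensions, mem_commonNbrs, Set.forall_mem_range, flip, ρ, forall_and,
      and_right_comm, forall_comm (α := Fin s)]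
  have hrange (z : Fin k → α) : commonNbrs ρ B {z} = commonNbrs r B (Set.range z) := by
    ext b
    simp only [mem_commonNbrs, Set.mem_singleton_iff, forall_eq,
      Set.forall_mem_range, ρ]
  have hcard : #(badExtensions r U B θ ∅ k) ≤ #U ^ k :=
    (card_filter_le _ _).trans_eq (Fintype.card_piFinset_const _ _)
  calc _ = ∑ z ∈ badExtensions r U B θ ∅ k, (#(commonNbrs r B (Set.range z)) : ℝ) ^ s := by
        simp only [hfilter, ← hrange]
        exact_mod_cast sum_card_commonNbrs_range_eq_sum_card_pow ρ _ B s
    _ ≤ ∑ _z ∈ badExtensions r U B θ ∅ k, θ ^ s := by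
        gcongr with _ hz
        simpa only [Set.empty_union] using (mem_badExtensions.1 hz).2.le
    _ = #(badExtensions r U B θ ∅ k) * θ ^ s := by rw [sum_const, nsmul_eq_mul]
    _ ≤ #U ^ k * θ ^ s := by
        gcongr
        exact_mod_cast hcard

theorem sum_card_badExtensions_div_pow_le {Δ : ℕ} (hΔ : Δ ≠ 0) {q x η : ℝ} (hx : 0 ≤ x)
    (hη : 0 < η) (hxη : 2 * x ^ 2 ≤ η * q) :
    ∑ t ∈ Fintype.piFinset (fun _ : Fin (2 * Δ) => B),
        (#(badExtensions r (commonNbrs (flip r) U (Set.range t)) B (x * #B) ∅ Δ) : ℝ) / η ^ Δ ≤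
      #B ^ (2 * Δ) * ((q * #U) ^ Δ / 2) := by
  have hpow : 2 * x ^ (2 * Δ) ≤ η ^ Δ * q ^ Δ :=
    calc 2 * x ^ (2 * Δ) ≤ 2 ^ Δ * x ^ (2 * Δ) := by
          gcongr
          exact le_self_pow₀ one_le_two hΔ
      _ = (2 * x ^ 2) ^ Δ := by rw [mul_pow, pow_mul]
      _ ≤ (η * q) ^ Δ := by gcongr
      _ = η ^ Δ * q ^ Δ := mul_pow _ _ _
  rw [← sum_div, div_le_iff₀ (by positivity)]
  calc _ ≤ #U ^ Δ * (x * #B) ^ (2 * Δ) :=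
        sum_card_badExtensions_commonNbrs_le (by positivity) Δ (2 * Δ)
    _ = (#U ^ Δ * #B ^ (2 * Δ) / 2) * (2 * x ^ (2 * Δ)) := by ring
    _ ≤ (#U ^ Δ * #B ^ (2 * Δ) / 2) * (η ^ Δ * q ^ Δ) := by gcongr
    _ = #B ^ (2 * Δ) * ((q * #U) ^ Δ / 2) * η ^ Δ := by ring

-- `A` is the common in-neighbourhood of a random `2 * Δ`-tuple of vertices of `B`.
theorem dependent_random_choice {Δ : ℕ} (hΔ : Δ ≠ 0) {d q x η : ℝ} (hd : 0 ≤ d) (hq : 0 < q)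
    (hqd : q ≤ d ^ (2 * Δ)) (hx : 0 ≤ x) (hη : 0 < η) (hxη : 2 * x ^ 2 ≤ η * q)
    (hU : U.Nonempty) (hB : B.Nonempty)
    (hdense : d * #U * #B ≤ ∑ u ∈ U, (#(commonNbrs r B {u}) : ℝ)) :
    ∃ A ⊆ U, q * #U / 2 ≤ #A ∧
      (#(badExtensions r A B (x * #B) ∅ Δ) : ℝ) < (η * #A) ^ Δ := by
  let Bs : Finset (Fin (2 * Δ) → β) := Fintype.piFinset fun _ => B
  let N (t : Fin (2 * Δ) → β) : Finset α := commonNbrs (flip r) U (Set.range t)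
  let bad (t : Fin (2 * Δ) → β) : ℝ := #(badExtensions r (N t) B (x * #B) ∅ Δ)
  have : (0 : ℝ) < #U := by exact_mod_cast hU.card_pos
  have hBs : (#Bs : ℝ) = #B ^ (2 * Δ) := by exact_mod_cast Fintype.card_piFinset_const B (2 * Δ)
  have hBs0 : Bs.Nonempty := Fintype.piFinset_nonempty.2 fun _ => hB
  have hfirst : #Bs * (q * #U) ≤ ∑ t ∈ Bs, (#(N t) : ℝ) := by
    refine le_trans ?_ (card_pow_mul_le_sum_card_commonNbrs hd hdense (2 * Δ))
    rw [hBs]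
    gcongr
  have hmoment : #Bs * (q * #U) ^ Δ ≤ ∑ t ∈ Bs, (#(N t) : ℝ) ^ Δ :=
    card_mul_pow_le_sum_pow (by positivity) (fun _ _ => by positivity) hfirst Δ
  have hbad : ∑ t ∈ Bs, bad t / η ^ Δ ≤ #Bs * ((q * #U) ^ Δ / 2) :=
    hBs ▸ sum_card_badExtensions_div_pow_le hΔ hx hη hxη
  have haverage : ∑ _t ∈ Bs, (q * #U) ^ Δ / 2 ≤ ∑ t ∈ Bs, ((#(N t) : ℝ) ^ Δ - bad t / η ^ Δ) := by
    rw [sum_sub_distrib, sum_const, nsmul_eq_mul]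
    linarith
  obtain ⟨t, -, ht⟩ := exists_le_of_sum_le hBs0 haverage
  have hbad0 : 0 ≤ bad t / η ^ Δ := by positivity
  have hpos : 0 < (q * #U) ^ Δ / 2 := by positivity
  refine ⟨N t, commonNbrs_subset, le_of_pow_le_pow_left₀ hΔ (by positivity) ?_, ?_⟩
  · calc (q * #U / 2) ^ Δ = (q * #U) ^ Δ / 2 ^ Δ := div_pow _ _ _
      _ ≤ (q * #U) ^ Δ / 2 := by
        gcongr
        exact le_self_pow₀ one_le_two hΔ
      _ ≤ (#(N t) : ℝ) ^ Δ := by linarith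
  · rw [mul_pow, ← div_lt_iff₀' (by positivity)]
    linarith

end DependentRandomChoice

section GoodSets

variable {α β : Type*} {r : α → β → Prop} {A S : Finset α} {B : Finset β} {θ h : ℝ} {Δ : ℕ}

theorem sum_card_badExtensions_insert_le (S : Set α) (j : ℕ) :
    ∑ v ∈ A, #(badExtensions r A B θ (insert v S) j) ≤ #(badExtensions r A B θ S (j + 1)) := by
  rw [← card_sigma]
  refine card_le_card_of_injOn (fun p => Fin.cons p.1 p.2) ?_ ?_
  · rintro ⟨v, t⟩ hvt
    obtain ⟨hv, ht⟩ := mem_sigma.1 hvt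
    rw [mem_badExtensions] at ht
    refine mem_badExtensions.2 ⟨Fin.cases hv ht.1, ?_⟩
    rw [Fin.range_cons, Set.union_insert, ← Set.insert_union]
    exact ht.2
  · rintro ⟨v, t⟩ - ⟨v', t'⟩ - heq
    obtain ⟨rfl, rfl⟩ := Fin.cons_inj.1 heq
    rfl

/-- A set `S` of at most `Δ` vertices is good if fewer than `h ^ (Δ - #S)` of its extensions to a
`Δ`-tuple by vertices of `A` have fewer than `θ` common out-neighbours in `B`. -/
def IsGoodSet (r : α → β → Prop) (A : Finset α) (B : Finset β) (θ h : ℝ) (Δ : ℕ)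
    (S : Finset α) : Prop :=
  (#(badExtensions r A B θ S (Δ - #S)) : ℝ) < h ^ (Δ - #S)

theorem IsGoodSet.le_card_commonNbrs (hS : IsGoodSet r A B θ h Δ S) (hh : 0 ≤ h) (hhA : h ≤ #A) :
    θ ≤ #(commonNbrs r B S) := by
  by_contra! hlt
  have hall : badExtensions r A B θ S (Δ - #S) = Fintype.piFinset fun _ => A := by
    refine filter_true_of_mem fun t _ => lt_of_le_of_lt ?_ hlt
    exact_mod_cast card_le_card (commonNbrs_anti Set.subset_union_left)
  rw [IsGoodSet, hall, Fintype.card_piFinset_const, Nat.cast_pow] at hS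
  exact hS.not_ge (pow_le_pow_left₀ hh hhA _)

open Classical in
theorem IsGoodSet.card_filter_not_insert_le [DecidableEq α] (hS : IsGoodSet r A B θ h Δ S)
    (hh : 0 < h) (hcard : #S < Δ) :
    (#{v ∈ A | v ∉ S ∧ ¬ IsGoodSet r A B θ h Δ (insert v S)} : ℝ) ≤ h := by
  set X := {v ∈ A | v ∉ S ∧ ¬ IsGoodSet r A B θ h Δ (insert v S)} with hX
  obtain ⟨j, hj⟩ : ∃ j, Δ - #S = j + 1 := ⟨Δ - #S - 1, by omega⟩
  have hinsert : ∀ v ∈ X, h ^ j ≤ #(badExtensions r A B θ (insert v ↑S) j) := by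
    intro v hv
    obtain ⟨-, hvS, hbad⟩ := mem_filter.1 hv
    rwa [IsGoodSet, card_insert_of_notMem hvS, show Δ - (#S + 1) = j by omega, coe_insert,
      not_lt] at hbad
  rw [IsGoodSet, hj] at hS
  refine le_of_mul_le_mul_right ?_ (pow_pos hh j)
  calc #X * h ^ j ≤ ∑ v ∈ X, (#(badExtensions r A B θ (insert v ↑S) j) : ℝ) := by
        rw [← nsmul_eq_mul]
        exact card_nsmul_le_sum _ _ _ hinsert
    _ ≤ ∑ v ∈ A, (#(badExtensions r A B θ (insert v ↑S) j) : ℝ) :=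
        sum_le_sum_of_subset_of_nonneg (filter_subset _ _) fun _ _ _ => by positivity
    _ ≤ #(badExtensions r A B θ S (j + 1)) := by
        exact_mod_cast sum_card_badExtensions_insert_le (S : Set α) j
    _ ≤ h * h ^ j := by
        rw [← pow_succ']
        exact hS.le

theorem exists_mem_avoiding {κ : Type*} {C used : Finset α} {Y : Finset κ} {bad : κ → Finset α}
    (hbad : ∀ y ∈ Y, #(bad y) ≤ h) (hlt : #used + #Y * h < #C) :
    ∃ v ∈ C, v ∉ used ∧ ∀ y ∈ Y, v ∉ bad y := by
  classical
  have hunion : (#(used ∪ Y.biUnion bad) : ℝ) < #C :=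
    calc (#(used ∪ Y.biUnion bad) : ℝ) ≤ #used + ∑ y ∈ Y, (#(bad y) : ℝ) := by
          exact_mod_cast (card_union_le _ _).trans (Nat.add_le_add_left card_biUnion_le _)
      _ ≤ #used + #Y * h := by
          rw [← nsmul_eq_mul]
          gcongr
          exact sum_le_card_nsmul _ _ _ hbad
      _ < #C := hlt
  obtain ⟨v, hv, hv'⟩ := exists_mem_notMem_of_card_lt_card (by exact_mod_cast hunion)
  simp only [mem_union, mem_biUnion, not_or, not_exists, not_and] at hv'
  exact ⟨v, hv, hv'⟩

theorem exists_mem_isGoodSet_insert [DecidableEq α] {κ : Type*} {C used : Finset α} {Y : Finset κ}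
    {S : κ → Finset α} (hh : 0 < h) (hgood : ∀ y ∈ Y, IsGoodSet r A B θ h Δ (S y))
    (hcard : ∀ y ∈ Y, #(S y) < Δ) (hused : ∀ y ∈ Y, S y ⊆ used) (hCA : C ⊆ A)
    (hroom : #used + #Y * h < #C) :
    ∃ v ∈ C, v ∉ used ∧ ∀ y ∈ Y, IsGoodSet r A B θ h Δ (insert v (S y)) := by
  classical
  obtain ⟨v, hv, hvused, hvgood⟩ := exists_mem_avoiding
    (fun y hy => (hgood y hy).card_filter_not_insert_le hh (hcard y hy)) hroom
  refine ⟨v, hv, hvused, fun y hy => ?_⟩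
  by_contra hbad
  exact hvgood y hy (mem_filter.2 ⟨hCA hv, fun hvS => hvused (hused y hy hvS), hbad⟩)

theorem exists_injOn_isGoodSet_image [DecidableEq α] [Nonempty α] {ι κ : Type*} [DecidableEq ι]
    {X : Finset ι} {Y : Finset κ} {P : κ → Finset ι} {cand : ι → Finset α} {p : ℕ}
    (hh : 0 < h) (hP : ∀ y ∈ Y, #(P y) ≤ Δ) (hp : ∀ w ∈ X, #{y ∈ Y | w ∈ P y} ≤ p)
    (hcand : ∀ w ∈ X, cand w ⊆ A) (hlarge : ∀ w ∈ X, #X + p * h ≤ #(cand w))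
    (hgood : IsGoodSet r A B θ h Δ ∅) {X' : Finset ι} (hX' : X' ⊆ X) :
    ∃ φ : ι → α, Set.InjOn φ X' ∧ (∀ w ∈ X', φ w ∈ cand w) ∧
      ∀ y ∈ Y, IsGoodSet r A B θ h Δ ((P y ∩ X').image φ) := by
  induction X' using Finset.induction with
  | empty => exact ⟨fun _ => Classical.arbitrary α, by simp, by simp, by simp [hgood]⟩
  | insert w X' hw ih =>
    obtain ⟨hwX, hX'⟩ := insert_subset_iff.1 hX'
    obtain ⟨φ, hinj, hmem, hφ⟩ := ih hX'
    have hcard : ∀ y ∈ ({y ∈ Y | w ∈ P y} : Finset κ), #((P y ∩ X').image φ) < Δ := by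
      intro y hy
      obtain ⟨hy, hwy⟩ := mem_filter.1 hy
      have hss : P y ∩ X' ⊂ P y :=
        ssubset_iff_of_subset inter_subset_left |>.2 ⟨w, hwy, fun h => hw (mem_inter.1 h).2⟩
      exact card_image_le.trans_lt ((card_lt_card hss).trans_le (hP y hy))
    have hroom : (#(X'.image φ) : ℝ) + #{y ∈ Y | w ∈ P y} * h < #(cand w) := by
      have hlt : #(X'.image φ) < #X := card_image_le.trans_lt
        (card_lt_card ((ssubset_iff_of_subset hX').2 ⟨w, hwX, hw⟩))
      calc (#(X'.image φ) : ℝ) + #{y ∈ Y | w ∈ P y} * h < #X + p * h := by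
            refine add_lt_add_of_lt_of_le (by exact_mod_cast hlt) ?_
            gcongr
            exact hp w hwX
        _ ≤ #(cand w) := hlarge w hwX
    obtain ⟨v, hv, hvused, hvgood⟩ := exists_mem_isGoodSet_insert hh
      (fun y hy => hφ y (mem_filter.1 hy).1) hcard
      (fun y _ => image_subset_image inter_subset_right) (hcand w hwX) hroom
    have hupdate : Set.EqOn (update φ w v) φ X' :=
      fun u hu => update_of_ne (ne_of_mem_of_not_mem hu hw) _ _
    refine ⟨update φ w v, ?_, ?_, fun y hy => ?_⟩
    · rw [coe_insert, Set.injOn_insert (by simpa using hw), hupdate.injOn_iff, hupdate.image_eq,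
        update_self, ← coe_image]
      exact ⟨hinj, by simpa using hvused⟩
    · simp only [mem_insert, forall_eq_or_imp, update_self]
      exact ⟨hv, fun u hu => (hupdate hu).symm ▸ hmem u hu⟩
    · have himage : (P y ∩ X').image (update φ w v) = (P y ∩ X').image φ :=
        image_congr (hupdate.mono (by simp))
      by_cases hwy : w ∈ P y
      · rw [inter_insert_of_mem hwy, image_insert, himage, update_self]
        exact hvgood y (mem_filter.2 ⟨hy, hwy⟩)
      · rw [inter_insert_of_notMem hwy, himage]
        exact hφ y hy

end GoodSets

section Windows

variable {r : ℕ → ℕ → Prop} {N a c m : ℕ} {B : Finset ℕ}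

theorem sum_card_commonNbrs_singleton {α β : Type*} (r : α → β → Prop) (U : Finset α)
    (B : Finset β) :
    ∑ u ∈ U, #(commonNbrs r B {u}) = ∑ b ∈ B, #(commonNbrs (flip r) U {b}) := by
  classical
  simpa only [commonNbrs, Set.mem_singleton_iff, forall_eq, flip, bipartiteAbove,
    bipartiteBelow] using sum_card_bipartiteAbove_eq_sum_card_bipartiteBelow r

theorem HasFeedbackProperty.sub_le (hr : HasFeedbackProperty r N) (hca : c ≤ a) {b : ℕ}
    (hb : b ∈ Ico a (a + m)) (hbN : b < N) :
    a - c ≤ 2 * #(commonNbrs (flip r) (Ico c a) {b}) + m := by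
  classical
  obtain ⟨hab, hbm⟩ := mem_Ico.1 hb
  have hfeedback := hr c b (hca.trans hab) hbN
  have hsplit : #{u ∈ Ico c b | r u b} ≤ #{u ∈ Ico c a | r u b} + (b - a) := by
    rw [← Ico_union_Ico_eq_Ico hca hab, filter_union, ← Nat.card_Ico a b]
    exact (card_union_le _ _).trans (Nat.add_le_add_left (card_filter_le _ _) _)
  have hcommon : #(commonNbrs (flip r) (Ico c a) {b}) = #{u ∈ Ico c a | r u b} := by
    simp only [commonNbrs, Set.mem_singleton_iff, forall_eq, flip]
  omega

theorem HasFeedbackProperty.mul_card_le_sum (hr : HasFeedbackProperty r N) (hca : c ≤ a)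
    (haN : a + m ≤ N) (hB : B ⊆ Ico a (a + m)) :
    ((a - c - m : ℝ) / 2) * #B ≤ ∑ u ∈ Ico c a, (#(commonNbrs r B {u}) : ℝ) := by
  calc ((a - c - m : ℝ) / 2) * #B = ∑ _b ∈ B, (a - c - m : ℝ) / 2 := by
        rw [sum_const, nsmul_eq_mul, mul_comm]
    _ ≤ ∑ b ∈ B, (#(commonNbrs (flip r) (Ico c a) {b}) : ℝ) := by
        refine sum_le_sum fun b hb => ?_
        have hbN := (mem_Ico.1 (hB hb)).2.trans_le haN
        have hle : ((a - c : ℕ) : ℝ) ≤ 2 * #(commonNbrs (flip r) (Ico c a) {b}) + m := by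
          exact_mod_cast hr.sub_le hca (hB hb) hbN
        rw [Nat.cast_sub hca] at hle
        linarith
    _ = ∑ u ∈ Ico c a, (#(commonNbrs r B {u}) : ℝ) := by
        exact_mod_cast (sum_card_commonNbrs_singleton r (Ico c a) B).symm

theorem sum_Ico_add_mul (f : ℕ → ℝ) (c m t : ℕ) :
    ∑ u ∈ Ico c (c + t * m), f u =
      ∑ j ∈ range t, ∑ u ∈ Ico (c + j * m) (c + j * m + m), f u := by
  induction t with
  | zero => simp
  | succ t ih =>
    rw [sum_range_succ, ← ih, sum_Ico_consecutive _ (by lia) (by lia), Nat.succ_mul, add_assoc]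

theorem exists_block_le_sum {f : ℕ → ℝ} {t : ℕ} (ht : t ≠ 0) {y : ℝ}
    (h : t * y ≤ ∑ u ∈ Ico c (c + t * m), f u) :
    ∃ j < t, y ≤ ∑ u ∈ Ico (c + j * m) (c + j * m + m), f u := by
  have havg : ∑ _j ∈ range t, y ≤ ∑ j ∈ range t, ∑ u ∈ Ico (c + j * m) (c + j * m + m), f u := by
    rwa [← sum_Ico_add_mul, sum_const, card_range, nsmul_eq_mul]
  simpa only [mem_range] using exists_le_of_sum_le (nonempty_range_iff.2 ht) havg

theorem HasFeedbackProperty.exists_dense_window (hr : HasFeedbackProperty r N) {K m' : ℕ}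
    (hK : 0 < K) (hm' : 0 < m') (ha : K * m + m' ≤ a) (haN : a + m ≤ N)
    (hB : B ⊆ Ico a (a + m)) :
    ∃ a', a' + m' ≤ a ∧ a ≤ a' + (K * m + m') ∧
      (1 - 1 / K) / 2 * m' * #B ≤ ∑ u ∈ Ico a' (a' + m'), (#(commonNbrs r B {u}) : ℝ) := by
  let t := K * m / m' + 1
  have hle : t * m' ≤ K * m + m' := by
    rw [Nat.succ_mul]
    exact Nat.add_le_add_right (Nat.div_mul_le_self _ _) _
  have hge : K * m ≤ t * m' := (Nat.lt_div_mul_add hm').le.trans_eq (Nat.succ_mul _ _).symm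
  obtain ⟨c, rfl⟩ : ∃ c, a = c + t * m' := ⟨a - t * m', by lia⟩
  have hsum : t * ((1 - 1 / K) / 2 * m' * #B) ≤
      ∑ u ∈ Ico c (c + t * m'), (#(commonNbrs r B {u}) : ℝ) := by
    have hm : (m : ℝ) ≤ t * m' / K := by
      rw [le_div_iff₀ (by positivity), mul_comm]
      exact_mod_cast hge
    calc (t : ℝ) * ((1 - 1 / K) / 2 * m' * #B) = (t * m' - t * m' / K) / 2 * #B := by ring
      _ ≤ ((c + t * m' : ℕ) - c - m : ℝ) / 2 * #B := by
        push_cast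
        gcongr
        linarith
      _ ≤ _ := hr.mul_card_le_sum (by lia) haN hB
  obtain ⟨j, hj, hdense⟩ := exists_block_le_sum (Nat.succ_ne_zero _) hsum
  have hjt : (j + 1) * m' ≤ t * m' := Nat.mul_le_mul_right _ hj
  rw [Nat.succ_mul] at hjt
  exact ⟨c + j * m', by lia, by lia, hdense⟩

/-- Numerical constants for the embedding of a graded digraph of maximum in-degree `Δ` and maximum
out-degree `p`. A level of `v` vertices is embedded in a subset `A` of a window of length `C * v`
that keeps a proportion `q / 2` of that window. Each vertex has at least `x * #A` candidates, of
which its at most `p` out-neighbours forbid `η * #A` each. The next window is sought within a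
distance of `K` times the length of the last one, which gives density at least `(1 - 1 / K) / 2`. -/
structure EmbeddingConstants (Δ p K C : ℕ) (q x η : ℝ) : Prop where
  K_pos : 0 < K
  q_pos : 0 < q
  q_le : q ≤ ((1 - 1 / K) / 2) ^ (2 * Δ)
  x_nonneg : 0 ≤ x
  x_le_one : x ≤ 1
  η_pos : 0 < η
  η_le_one : η ≤ 1
  two_mul_sq_le : 2 * x ^ 2 ≤ η * q
  two_le : 2 ≤ (x - p * η) * q * C

theorem HasFeedbackProperty.exists_window_isGoodSet_empty (hr : HasFeedbackProperty r N)
    {Δ p K C : ℕ} {q x η : ℝ} (hc : EmbeddingConstants Δ p K C q x η) (hΔ : Δ ≠ 0) {m' : ℕ}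
    (hm' : 0 < m') (ha : K * m + m' ≤ a) (haN : a + m ≤ N) (hB : B ⊆ Ico a (a + m)) :
    ∃ a', ∃ A ⊆ Ico a' (a' + m'), a' + m' ≤ a ∧ a ≤ a' + (K * m + m') ∧ q * m' / 2 ≤ #A ∧
      IsGoodSet r A B (x * #B) (η * #A) Δ ∅ := by
  obtain ⟨a', ha', haa', hdense⟩ := hr.exists_dense_window hc.K_pos hm' ha haN hB
  have hinv : (1 : ℝ) / K ≤ 1 := by
    rw [div_le_one (by exact_mod_cast hc.K_pos)]
    exact_mod_cast hc.K_pos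
  have hwindow : #(Ico a' (a' + m')) = m' := by simp
  simp only [IsGoodSet, coe_empty, card_empty, Nat.sub_zero]
  rcases B.eq_empty_or_nonempty with rfl | hB
  · have hinv₀ : (0 : ℝ) ≤ 1 / K := by positivity
    have hq : q ≤ 1 := hc.q_le.trans (pow_le_one₀ (by linarith) (by linarith))
    have hη := hc.η_pos
    refine ⟨a', Ico a' (a' + m'), Subset.rfl, ha', haa', ?_, ?_⟩
    · rw [hwindow]
      have : q * m' ≤ 1 * m' := by gcongr
      linarith [(Nat.cast_nonneg m' : (0 : ℝ) ≤ m')]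
    · rw [badExtensions_eq_empty (by simp), card_empty, Nat.cast_zero, hwindow]
      positivity
  · have hU : (Ico a' (a' + m')).Nonempty := by simpa using hm'
    obtain ⟨A, hA, hcard, hbad⟩ := dependent_random_choice hΔ (by linarith) hc.q_pos hc.q_le
      hc.x_nonneg hc.η_pos hc.two_mul_sq_le hU hB (by rwa [hwindow])
    exact ⟨a', A, hA, ha', haa', hwindow ▸ hcard, hbad⟩

end Windows

section LevelEmbedding

variable {V α : Type*} {D : Digraph V} {f : V → ℕ} {r : α → α → Prop} {x : ℝ} {i : ℕ}

/-- Given, for each vertex of level `i`, a set of candidates that makes up a proportion `x` of `A`,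
the part of `D` on the levels `≥ i` of the grading `f` embeds in `S` so that every vertex of level
`i` is sent to one of its candidates. -/
def EmbedsAbove (D : Digraph V) (f : V → ℕ) (r : α → α → Prop) (x : ℝ) (i : ℕ) (S : Set α)
    (A : Finset α) : Prop :=
  ∀ cand : V → Finset α, (∀ w, f w = i → cand w ⊆ A ∧ x * #A ≤ #(cand w)) →
    ∃ φ : V → α, Set.InjOn φ {w | i ≤ f w} ∧ Set.MapsTo φ {w | i ≤ f w} S ∧
      (∀ w, f w = i → φ w ∈ cand w) ∧ ∀ u v, i ≤ f u → D.Adj u v → r (φ u) (φ v)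

theorem EmbedsAbove.of_level_empty {S : Set α} {A : Finset α} (hx : x ≤ 1)
    (h : EmbedsAbove D f r x (i + 1) S A) (hi : ∀ v, f v ≠ i) : EmbedsAbove D f r x i S A := by
  have hlevel : ∀ v, i ≤ f v ↔ i + 1 ≤ f v := fun v => by grind
  intro cand _
  obtain ⟨φ, hinj, hmaps, -, hadj⟩ := h (fun _ => A) fun _ _ =>
    ⟨Subset.rfl, mul_le_of_le_one_left (Nat.cast_nonneg _) hx⟩
  simp only [← hlevel] at hinj hmaps hadj
  exact ⟨φ, hinj, hmaps, fun w hw => (hi w hw).elim, hadj⟩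

theorem EmbedsAbove.exists_extension (hf : ∀ u v, D.Adj u v → f v = f u + 1) {S : Set α}
    {A B : Finset α} (hB : EmbedsAbove D f r x (i + 1) S B) (hAS : Disjoint (A : Set α) S)
    {φ₀ : V → α} (hinj : Set.InjOn φ₀ {w | f w = i}) (hmem : ∀ w, f w = i → φ₀ w ∈ A)
    (hcommon : ∀ y, f y = i + 1 → x * #B ≤ #(commonNbrs r B (φ₀ '' {w | D.Adj w y}))) :
    ∃ φ : V → α, Set.EqOn φ φ₀ {w | f w = i} ∧ Set.InjOn φ {w | i ≤ f w} ∧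
      Set.MapsTo φ {w | i ≤ f w} (A ∪ S) ∧ ∀ u v, i ≤ f u → D.Adj u v → r (φ u) (φ v) := by
  classical
  obtain ⟨φ₁, hinj₁, hmaps₁, hcand₁, hadj₁⟩ :=
    hB _ fun y hy => ⟨commonNbrs_subset, hcommon y hy⟩
  have hlevels : {w | i ≤ f w} = {w | f w = i} ∪ {w | i + 1 ≤ f w} := by
    ext w
    grind
  let φ : V → α := {w | f w = i}.piecewise φ₀ φ₁
  have hlevel : Set.EqOn φ φ₀ {w | f w = i} := Set.piecewise_eqOn _ _ _
  have habove : Set.EqOn φ φ₁ {w | i + 1 ≤ f w} :=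
    (Set.piecewise_eqOn_compl _ _ _).mono fun w hw => (Nat.lt_of_succ_le hw).ne'
  have hmaps₀ : Set.MapsTo φ {w | f w = i} A := fun w hw => hlevel hw ▸ hmem w hw
  have hmaps₁' : Set.MapsTo φ {w | i + 1 ≤ f w} S := hmaps₁.congr habove.symm
  refine ⟨φ, hlevel, ?_, ?_, fun u v hu huv => ?_⟩
  · have hdisj : Disjoint {w | f w = i} {w | i + 1 ≤ f w} :=
      Set.disjoint_left.2 fun w hw hw' => (Nat.lt_of_succ_le hw').ne' hw
    rw [hlevels, Set.injOn_union hdisj]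
    exact ⟨hinj.congr hlevel.symm, hinj₁.congr habove.symm, fun u hu v hv =>
      hAS.ne_of_mem (hmaps₀ hu) (hmaps₁' hv)⟩
  · rw [hlevels]
    exact hmaps₀.union_union hmaps₁'
  · have hv := hf u v huv
    rw [habove (show i + 1 ≤ f v by lia)]
    rcases hu.eq_or_lt with hu | hu
    · rw [hlevel hu.symm]
      exact (mem_commonNbrs.1 (hcand₁ v (by lia))).2 _ (Set.mem_image_of_mem _ huv)
    · rw [habove hu]
      exact hadj₁ u v hu huv

theorem EmbedsAbove.of_succ [Fintype V] [Nonempty α] (hf : ∀ u v, D.Adj u v → f v = f u + 1)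
    {Δ p : ℕ} (hin : ∀ v, D.inDegree v ≤ Δ) (hout : ∀ v, D.outDegree v ≤ p) {S S' : Set α}
    {A B : Finset α} (hB : EmbedsAbove D f r x (i + 1) S B) (hAS : Disjoint (A : Set α) S)
    (hA' : (A : Set α) ⊆ S') (hS' : S ⊆ S') {h : ℝ} (hh : 0 < h) (hhA : h ≤ #A)
    (hroom : #{v | f v = i} + p * h ≤ x * #A) (hgood : IsGoodSet r A B (x * #B) h Δ ∅) :
    EmbedsAbove D f r x i S' A := by
  classical
  intro cand hcand
  let P (y : V) : Finset V := {w | D.Adj w y}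
  have hP : ∀ y, #(P y) ≤ Δ := fun y =>
    (Nat.subtype_card (P y) (by simp [P])).symm.trans_le (hin y)
  have hp : ∀ w, #{y ∈ ({y | f y = i + 1} : Finset V) | w ∈ P y} ≤ p := fun w =>
    (card_le_card fun y hy => by simpa [P] using (mem_filter.1 hy).2).trans
      ((Nat.subtype_card {y | D.Adj w y} (by simp)).symm.trans_le (hout w))
  obtain ⟨φ₀, hinj, hmem, hgoodP⟩ := exists_injOn_isGoodSet_image (X := {v | f v = i}) hh
    (fun y _ => hP y) (fun w _ => hp w) (fun w hw => (hcand w (by simpa using hw)).1)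
    (fun w hw => hroom.trans (hcand w (by simpa using hw)).2) hgood Subset.rfl
  simp only [mem_filter, mem_univ, true_and, coe_filter] at hinj hmem hgoodP
  have hcommon : ∀ y, f y = i + 1 → x * #B ≤ #(commonNbrs r B (φ₀ '' {w | D.Adj w y})) := by
    intro y hy
    have hinter : P y ∩ ({v | f v = i} : Finset V) = P y :=
      inter_eq_left.2 fun w hw => by
        have := hf w y (by simpa [P] using hw)
        exact mem_filter.2 ⟨mem_univ w, by lia⟩
    simpa [hinter, P] using (hgoodP y hy).le_card_commonNbrs hh.le hhA
  obtain ⟨φ, hφ, hinj', hmaps, hadj⟩ := hB.exists_extension hf hAS hinj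
    (fun w hw => (hcand w hw).1 (hmem w hw)) hcommon
  exact ⟨φ, hinj', hmaps.mono_right (Set.union_subset hA' hS'),
    fun w hw => hφ hw ▸ hmem w hw, hadj⟩

end LevelEmbedding

section Stages

variable {V : Type*} [Fintype V] {D : Digraph V} {f : V → ℕ} {r : ℕ → ℕ → Prop}
  {N K C Δ p i a m : ℕ} {q x η : ℝ} {A : Finset ℕ}

/-- The state of the embedding once all levels `≥ i` are settled: these levels embed in the interval
`[a, N)`, with level `i` in the subset `A` of the window `[a, a + m)`. The budget says that
`[a, N)`, extended by the reserve `K * m` for the search of the next window, has length at most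
`(K + 1) * C` times the number of vertices settled. -/
structure IsStage (D : Digraph V) (f : V → ℕ) (r : ℕ → ℕ → Prop) (x : ℝ) (N K C i a m : ℕ)
    (A : Finset ℕ) : Prop where
  subset_window : A ⊆ Ico a (a + m)
  window_le : a + m ≤ N
  budget : N + K * m ≤ a + (K + 1) * (C * #{v | i ≤ f v})
  embeds : EmbedsAbove D f r x i (Set.Ico a N) A

theorem IsStage.of_level_empty (hx : x ≤ 1) (h : IsStage D f r x N K C (i + 1) a m A)
    (hi : ∀ v, f v ≠ i) : IsStage D f r x N K C i a m A where
  subset_window := h.subset_window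
  window_le := h.window_le
  budget := by
    simpa only [Nat.succ_le_iff, (hi _).symm.le_iff_lt] using h.budget
  embeds := h.embeds.of_level_empty hx hi

theorem card_level_add_card_above (f : V → ℕ) (i : ℕ) :
    #{v | f v = i} + #{v | i + 1 ≤ f v} = #{v | i ≤ f v} := by
  classical
  rw [← card_union_of_disjoint]
  · congr 1
    grind
  · exact disjoint_filter.2 fun v _ hv => by lia

theorem EmbeddingConstants.C_pos (hc : EmbeddingConstants Δ p K C q x η) : 0 < C := by
  refine Nat.pos_of_ne_zero fun hC => ?_
  have := hc.two_le
  norm_num [hC] at this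

theorem EmbeddingConstants.card_add_mul_le (hc : EmbeddingConstants Δ p K C q x η) {l : ℕ}
    (hA : q * (C * l : ℕ) / 2 ≤ #A) : l + p * (η * #A) ≤ x * #A := by
  have hpos : 0 < x - p * η := by
    have hq := hc.q_pos
    by_contra! hle
    have : (x - p * η) * (q * C) ≤ 0 := mul_nonpos_of_nonpos_of_nonneg hle (by positivity)
    linarith [hc.two_le]
  have hle : (l : ℝ) ≤ (x - p * η) * #A :=
    calc (l : ℝ) = 2 * l / 2 := by ring
      _ ≤ (x - p * η) * q * C * l / 2 := by
        gcongr
        exact hc.two_le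
      _ = (x - p * η) * (q * (C * l : ℕ) / 2) := by
        push_cast
        ring
      _ ≤ (x - p * η) * #A := by gcongr
  linarith

theorem IsStage.exists_pred (hc : EmbeddingConstants Δ p K C q x η) (hΔ : Δ ≠ 0)
    (hr : HasFeedbackProperty r N) (hf : ∀ u v, D.Adj u v → f v = f u + 1)
    (hin : ∀ v, D.inDegree v ≤ Δ) (hout : ∀ v, D.outDegree v ≤ p)
    (hN : (K + 1) * (C * Fintype.card V) ≤ N) (h : IsStage D f r x N K C (i + 1) a m A) :
    ∃ a' m' A', IsStage D f r x N K C i a' m' A' := by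
  by_cases hi : ∀ v, f v ≠ i
  · exact ⟨a, m, A, h.of_level_empty hc.x_le_one hi⟩
  push Not at hi
  let l := #{v | f v = i}
  have hl : 0 < l := card_pos.2 (by simpa [Finset.Nonempty] using hi)
  have hm' : 0 < C * l := Nat.mul_pos hc.C_pos hl
  have hsplit := card_level_add_card_above f i
  have hcost : C * l + C * #{v | i + 1 ≤ f v} = C * #{v | i ≤ f v} := by
    rw [← hsplit, Nat.mul_add]
  have hroom : K * m + C * l ≤ a := by
    have : C * #{v | i ≤ f v} ≤ C * Fintype.card V := Nat.mul_le_mul_left _ (card_le_univ _)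
    nlinarith [h.budget]
  obtain ⟨a', A', hA', ha', haa', hcard, hgood⟩ :=
    hr.exists_window_isGoodSet_empty hc hΔ hm' hroom h.window_le h.subset_window
  have hA'pos : (0 : ℝ) < #A' := by
    have hq := hc.q_pos
    have : (0 : ℝ) < (C * l : ℕ) := by exact_mod_cast hm'
    exact (by positivity : 0 < q * (C * l : ℕ) / 2).trans_le hcard
  have haN := h.window_le
  have hwindow : (A' : Set ℕ) ⊆ Set.Ico a' (a' + C * l) := by simpa using coe_subset.2 hA'
  have hdisj : Disjoint (A' : Set ℕ) (Set.Ico a N) :=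
    Set.disjoint_left.2 fun u hu hu' => ((hwindow hu).2.trans_le ha').not_ge hu'.1
  refine ⟨a', C * l, A', hA', by lia, by nlinarith [h.budget], ?_⟩
  exact h.embeds.of_succ hf hin hout hdisj (hwindow.trans (Set.Ico_subset_Ico_right (by lia)))
    (Set.Ico_subset_Ico_left (by lia)) (mul_pos hc.η_pos hA'pos)
    (mul_le_of_le_one_left hA'pos.le hc.η_le_one) (hc.card_add_mul_le hcard) hgood

theorem exists_embedding_of_hasFeedbackProperty (hc : EmbeddingConstants Δ p K C q x η)
    (hΔ : Δ ≠ 0) (hr : HasFeedbackProperty r N) (hf : ∀ u v, D.Adj u v → f v = f u + 1)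
    (hin : ∀ v, D.inDegree v ≤ Δ) (hout : ∀ v, D.outDegree v ≤ p)
    (hN : (K + 1) * (C * Fintype.card V) ≤ N) :
    ∃ φ : V → ℕ, Injective φ ∧ (∀ v, φ v < N) ∧ ∀ u v, D.Adj u v → r (φ u) (φ v) := by
  obtain ⟨H, hH⟩ : ∃ H, ∀ v, f v < H := by
    obtain ⟨H, hH⟩ := (Set.finite_range f).bddAbove
    exact ⟨H + 1, fun v => Nat.lt_succ_of_le (hH (Set.mem_range_self v))⟩
  have hlast : IsStage D f r x N K C H N 0 ∅ :=
    ⟨by simp, le_rfl, by simp, fun _ _ => ⟨fun _ => 0, by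
      simp [Set.InjOn, Set.MapsTo, (hH _).not_ge, (hH _).ne]⟩⟩
  obtain ⟨a, m, A, h⟩ : ∃ a m A, IsStage D f r x N K C 0 a m A :=
    Nat.decreasingInduction (motive := fun i _ => ∃ a m A, IsStage D f r x N K C i a m A)
      (fun i _ ⟨_, _, _, h⟩ => h.exists_pred hc hΔ hr hf hin hout hN) ⟨N, 0, ∅, hlast⟩
      (Nat.zero_le H)
  obtain ⟨φ, hinj, hmaps, -, hadj⟩ := h.embeds (fun _ => A) fun _ _ =>
    ⟨Subset.rfl, mul_le_of_le_one_left (Nat.cast_nonneg _) hc.x_le_one⟩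
  simp only [Nat.zero_le, Set.ofPred_true, forall_const] at hinj hmaps hadj
  exact ⟨φ, Set.injOn_univ.1 hinj, fun v => (hmaps (Set.mem_univ v)).2, hadj⟩

end Stages

section Ramsey

variable {V W : Type*} [Fintype V]

theorem three_div_four_div_four_pow_le {Δ : ℕ} (hΔ : Δ ≠ 0) :
    (3 / 4 / 4 ^ Δ : ℝ) ≤ ((1 - 1 / (8 * Δ : ℕ)) / 2) ^ (2 * Δ) := by
  have hinv : (1 : ℝ) / (8 * Δ : ℕ) ≤ 1 := by
    rw [div_le_one (by positivity)]
    exact_mod_cast Nat.succ_le_of_lt (by positivity)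
  calc (3 / 4 / 4 ^ Δ : ℝ) = (1 + (2 * Δ : ℕ) * -(1 / (8 * Δ : ℕ))) / 2 ^ (2 * Δ) := by
        rw [pow_mul]
        push_cast
        field_simp
        norm_num
        ring
    _ ≤ (1 + -(1 / (8 * Δ : ℕ) : ℝ)) ^ (2 * Δ) / 2 ^ (2 * Δ) := by
        gcongr
        exact one_add_mul_le_pow (by linarith) _
    _ = ((1 - 1 / (8 * Δ : ℕ)) / 2) ^ (2 * Δ) := by rw [div_pow, ← sub_eq_add_neg]

-- With `q = 3 / 4 / 4 ^ Δ`, these are `x = q / (8 * p)` and `η = q / (32 * p ^ 2)`.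
theorem embeddingConstants_of_ne_zero {Δ p : ℕ} (hΔ : Δ ≠ 0) (hp : p ≠ 0) :
    EmbeddingConstants Δ p (8 * Δ) (64 * p * 16 ^ Δ) (3 / 4 / 4 ^ Δ) (3 / 32 / (p * 4 ^ Δ))
      (3 / 128 / (p ^ 2 * 4 ^ Δ)) := by
  have hp' : (1 : ℝ) ≤ p := by exact_mod_cast Nat.one_le_iff_ne_zero.2 hp
  have hfour : (1 : ℝ) ≤ 4 ^ Δ := one_le_pow₀ (by norm_num)
  have hsixteen : (16 : ℝ) ^ Δ = (4 ^ Δ) ^ 2 := by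
    rw [← pow_mul, mul_comm, pow_mul]
    norm_num
  constructor
  case K_pos | q_pos | x_nonneg | η_pos => positivity
  case q_le => exact three_div_four_div_four_pow_le hΔ
  case x_le_one =>
    rw [div_le_one (by positivity)]
    linarith [one_le_mul_of_one_le_of_one_le hp' hfour]
  case η_le_one =>
    rw [div_le_one (by positivity)]
    linarith [one_le_mul_of_one_le_of_one_le (one_le_pow₀ hp' (n := 2)) hfour]
  case two_mul_sq_le =>
    field_simp
    norm_num
  case two_le =>
    push_cast
    rw [hsixteen]
    field_simp
    norm_num

theorem containsCopy_of_card_le [Fintype W] [Nonempty W] {D : Digraph V} {T : Digraph W}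
    (hT : ∀ u v, u ≠ v → ¬ T.Adj u v → T.Adj v u) {f : V → ℕ}
    (hf : ∀ u v, D.Adj u v → f v = f u + 1) {Δ p : ℕ} (hΔ : Δ ≠ 0) (hp : p ≠ 0)
    (hin : ∀ v, D.inDegree v ≤ Δ) (hout : ∀ v, D.outDegree v ≤ p)
    (hW : (8 * Δ + 1) * (64 * p * 16 ^ Δ * Fintype.card V) ≤ Fintype.card W) :
    T.ContainsCopy D := by
  obtain ⟨σ, hσ, hr⟩ := exists_hasFeedbackProperty hT
  obtain ⟨φ, hinj, hφ, hadj⟩ := exists_embedding_of_hasFeedbackProperty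
    (embeddingConstants_of_ne_zero hΔ hp) hΔ hr hf hin hout hW
  exact ⟨σ ∘ φ, fun u v huv => hinj (hσ (hφ u) (hφ v) huv), hadj⟩

theorem graded_oriented_ramsey_upper_in_out_general (D : Digraph V) (n Δminus Δplus : ℕ)
    (hn : Fintype.card V = n)
    (hgraded : ∃ f : V → ℕ, ∀ u v : V, D.Adj u v → f v = f u + 1)
    (hedge : ∃ u v : V, D.Adj u v)
    (hin : ∀ v : V, D.inDegree v ≤ Δminus)
    (hout : ∀ v : V, D.outDegree v ≤ Δplus) :
    orientedRamsey D ≤ 576 * Δplus * Δminus * 2 ^ (4 * Δminus) * n := by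
  obtain ⟨f, hf⟩ := hgraded
  obtain ⟨u, v, huv⟩ := hedge
  have hminus : Δminus ≠ 0 := by
    have : Nonempty {u | D.Adj u v} := ⟨⟨u, huv⟩⟩
    exact (Nat.card_pos.trans_le (hin v)).ne'
  have hplus : Δplus ≠ 0 := by
    have : Nonempty {v | D.Adj u v} := ⟨⟨v, huv⟩⟩
    exact (Nat.card_pos.trans_le (hout u)).ne'
  have hn' : n ≠ 0 := hn ▸ (Fintype.card_pos_iff.2 ⟨u⟩).ne'
  refine Nat.sInf_le fun T hT => ?_
  have : NeZero (576 * Δplus * Δminus * 2 ^ (4 * Δminus) * n) := ⟨by positivity⟩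
  refine containsCopy_of_card_le (fun u v huv h => (hT.2 v u huv.symm).2 h) hf hminus hplus hin
    hout ?_
  rw [Fintype.card_fin, hn, pow_mul]
  calc (8 * Δminus + 1) * (64 * Δplus * 16 ^ Δminus * n)
      ≤ (8 * Δminus + Δminus) * (64 * Δplus * 16 ^ Δminus * n) := by
        gcongr
        exact Nat.one_le_iff_ne_zero.2 hminus
    _ = 576 * Δplus * Δminus * (2 ^ 4) ^ Δminus * n := by ring

end Ramsey

/-- If `D` is a graded digraph on `n` vertices with at least one edge,
maximum in-degree `Δ⁻` and maximum out-degree `Δ⁺`, then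
`r⃗(D) ≤ 10⁹ · Δ⁺ · (Δ⁻)² · 2^(4Δ⁻) · n`. -/
theorem graded_oriented_ramsey_upper_in_out {V : Type} [Fintype V] (D : Digraph V)
    (n Δminus Δplus : ℕ)
    (hn : Fintype.card V = n)
    (hgraded : ∃ f : V → ℕ, ∀ u v : V, D.Adj u v → f v = f u + 1)
    (hedge : ∃ u v : V, D.Adj u v)
    (hin : ∀ v : V, D.inDegree v ≤ Δminus)
    (hout : ∀ v : V, D.outDegree v ≤ Δplus) :
    orientedRamsey D ≤ 10 ^ 9 * Δplus * Δminus ^ 2 * 2 ^ (4 * Δminus) * n := by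
  refine (graded_oriented_ramsey_upper_in_out_general D n Δminus Δplus hn hgraded hedge hin
    hout).trans ?_
  gcongr
  · norm_num
  · exact Nat.le_self_pow two_ne_zero _
end

section
/- For all integers d ≥ 1 and k ≥ 1, the d-dimensional grid digraph Γ⃗_{d,k} satisfies r⃗(Γ⃗_{d,k}) ≤ 10⁹ · d³ · 2^(4d) · k^d, i.e., its oriented Ramsey number is at most 10⁹ d³ 2^(4d) times its number of vertices. -/
/-- The `d`-dimensional grid digraph on vertex set `[k]^d`: there is an edge from `u` to `v`
iff `v` is obtained from `u` by increasing exactly one coordinate by one. -/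
def gridDigraph (d k : ℕ) : Digraph (Fin d → Fin k) where
  Adj u v := ∃ i : Fin d, ((v i : ℕ) = (u i : ℕ) + 1) ∧ ∀ j : Fin d, j ≠ i → v j = u j
/-!
In a median order of a tournament, at least half of the vertices of any interval ending just before
a vertex are in-neighbors of that vertex. Grade the grid by coordinate sum and embed its levels from
the top down, moving left through the median order. If a set `X'` is ready to host level `i + 1`,
averaging yields a block to the left of `X'` in which a proportion of almost `1 / 2` of the pairs
point to `X'`. Dependent random choice inside that block produces a set `X` in which only a tiny
proportion of the `d`-tuples have few common out-neighbors in `X'`. A greedy hypergraph embedding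
then places level `i` in `X`, avoiding these bad tuples, so that each vertex of level `i + 1` keeps
a set of candidates of a fixed proportion `τ` of `X'`. The slabs used are proportional to the levels
they host, so their total length is linear in the number of vertices.
-/


open Finset

section MedianOrder

variable {W : Type*} [Fintype W] {N : ℕ}

/-- The vertices whose position in the ordering `pos` lies in `[a, b)`. -/
def slab (pos : W ≃ Fin N) (a b : ℕ) : Finset W :=
  {x | a ≤ pos x ∧ pos x < b}

@[simp]
theorem mem_slab {pos : W ≃ Fin N} {a b : ℕ} {x : W} :
    x ∈ slab pos a b ↔ a ≤ pos x ∧ pos x < b := by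
  simp [slab]

theorem slab_eq_empty (pos : W ≃ Fin N) {a b : ℕ} (h : b ≤ a) : slab pos a b = ∅ := by
  ext x
  simp only [mem_slab, notMem_empty, iff_false]
  omega

theorem card_slab (pos : W ≃ Fin N) (a : ℕ) {b : ℕ} (hb : b ≤ N) :
    #(slab pos a b) = b - a := by
  rw [← Nat.card_Ico]
  refine card_bij (fun x _ ↦ (pos x : ℕ)) (by simp) (fun x _ y _ h ↦ ?_) fun i hi ↦ ?_
  · exact pos.injective (Fin.ext h)
  · have hi := mem_Ico.1 hi
    exact ⟨pos.symm ⟨i, by omega⟩, by simpa using hi, by simp⟩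

theorem sum_slab_add_sum_slab {M : Type*} [AddCommMonoid M] (pos : W ≃ Fin N) (f : W → M)
    {a b c : ℕ} (hab : a ≤ b) (hbc : b ≤ c) :
    ∑ x ∈ slab pos a b, f x + ∑ x ∈ slab pos b c, f x = ∑ x ∈ slab pos a c, f x := by
  classical
  rw [← sum_union (disjoint_left.2 fun x ↦ by simp; omega)]
  congr 1
  ext x
  simp only [mem_union, mem_slab]
  omega

theorem sum_slab_mul {M : Type*} [AddCommMonoid M] (pos : W ≃ Fin N) (f : W → M) (a l q : ℕ) :
    ∑ x ∈ slab pos a (a + q * l), f x =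
      ∑ j ∈ range q, ∑ x ∈ slab pos (a + j * l) (a + j * l + l), f x := by
  induction q with
  | zero => simp [slab_eq_empty]
  | succ q ih =>
    rw [sum_range_succ, ← ih, sum_slab_add_sum_slab pos f (by omega) (by omega), Nat.succ_mul,
      add_assoc]

theorem val_cycleIcc {i j : Fin N} (hij : i ≤ j) (x : Fin N) :
    (Fin.cycleIcc i j x : ℕ) = if x = j then (i : ℕ) else if i ≤ x ∧ x < j then x + 1 else x := by
  have : NeZero N := ⟨by have := x.isLt; omega⟩
  split_ifs with hxj hx
  · rw [hxj, Fin.cycleIcc_of_last hij]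
  · rw [Fin.cycleIcc_of_ge_of_lt hx.1 hx.2, Fin.val_add_one_of_lt' (by omega)]
  · obtain hxi | hxj := (by omega : x < i ∨ j < x)
    · rw [Fin.cycleIcc_of_lt hxi]
    · rw [Fin.cycleIcc_of_gt hxj]

open Classical in
/-- The edges of `T` that point forward in the ordering `pos`. -/
noncomputable def forwardPairs (T : Digraph W) (pos : W ≃ Fin N) : Finset (W × W) :=
  {p | T.Adj p.1 p.2 ∧ pos p.1 < pos p.2}

/-- A median order of `T`: an ordering with the largest possible number of forward edges. -/
def IsMedianOrder (T : Digraph W) (pos : W ≃ Fin N) : Prop :=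
  ∀ pos' : W ≃ Fin N, #(forwardPairs T pos') ≤ #(forwardPairs T pos)

theorem exists_isMedianOrder (T : Digraph W) (hN : Fintype.card W = N) :
    ∃ pos : W ≃ Fin N, IsMedianOrder T pos :=
  have : Nonempty (W ≃ Fin N) := ⟨Fintype.equivFinOfCardEq hN⟩
  Finite.exists_max fun pos : W ≃ Fin N ↦ #(forwardPairs T pos)

open Classical in
theorem IsMedianOrder.card_outNeighbors_le_card_inNeighbors {T : Digraph W} {pos : W ≃ Fin N}
    (h : IsMedianOrder T pos) (w : W) (a : ℕ) :
    #{x ∈ slab pos a (pos w) | T.Adj w x} ≤ #{x ∈ slab pos a (pos w) | T.Adj x w} := by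
  obtain ha | ha := lt_or_ge (pos w : ℕ) a
  · simp [slab_eq_empty pos ha.le]
  -- Moving `w` to position `a` reverses exactly the pairs formed by `w` and a member of the slab.
  set i : Fin N := ⟨a, ha.trans_lt (pos w).isLt⟩ with hi
  set pos' := pos.trans (Fin.cycleIcc i (pos w)) with hpos'
  have val_pos' (x : W) : (pos' x : ℕ) =
      if x = w then a else if a ≤ pos x ∧ pos x < pos w then pos x + 1 else pos x := by
    rw [hpos', Equiv.trans_apply, val_cycleIcc (show i ≤ pos w from ha)]
    simp [hi, Fin.le_def]
  have hgain : #{x ∈ slab pos a (pos w) | T.Adj w x} ≤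
      #(forwardPairs T pos' \ forwardPairs T pos) := by
    refine card_le_card_of_injOn (fun x ↦ (w, x)) (fun x hx ↦ ?_) (by simp [Set.InjOn])
    simp only [coe_filter, mem_slab, Set.mem_ofPred_eq] at hx
    have hxw : x ≠ w := by rintro rfl; omega
    simp only [forwardPairs, coe_sdiff, coe_filter, mem_univ, true_and, Set.mem_sdiff,
      Set.mem_ofPred_eq, Fin.lt_def, val_pos', if_neg hxw, if_pos hx.1, if_true]
    exact ⟨⟨hx.2, by omega⟩, by omega⟩
  have hloss : #(forwardPairs T pos \ forwardPairs T pos') ≤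
      #{x ∈ slab pos a (pos w) | T.Adj x w} := by
    have lost {p : W × W} (hp : p ∈ forwardPairs T pos \ forwardPairs T pos') :
        T.Adj p.1 p.2 ∧ p.2 = w ∧ a ≤ pos p.1 ∧ pos p.1 < pos p.2 := by
      simp only [forwardPairs, mem_sdiff, mem_filter, mem_univ, true_and, Fin.lt_def,
        val_pos'] at hp
      grind
    refine card_le_card_of_injOn Prod.fst (fun p hp ↦ ?_) fun p hp p' hp' h ↦
      Prod.ext h ((lost hp).2.1.trans (lost hp').2.1.symm)
    obtain ⟨hadj, hw, hle, hlt⟩ := lost hp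
    simp only [coe_filter, mem_slab, Set.mem_ofPred_eq]
    exact ⟨⟨hle, hw ▸ hlt⟩, hw ▸ hadj⟩
  exact hgain.trans ((card_sdiff_le_card_sdiff_iff.2 (h pos')).trans hloss)

open Classical in
theorem IsMedianOrder.sub_le_two_mul_card_inNeighbors {T : Digraph W} {pos : W ≃ Fin N}
    (h : IsMedianOrder T pos) (hT : T.IsTournament) (w : W) (a : ℕ) :
    pos w - a ≤ 2 * #{x ∈ slab pos a (pos w) | T.Adj x w} := by
  have hout := h.card_outNeighbors_le_card_inNeighbors w a
  have hsplit := card_filter_add_card_filter_not (s := slab pos a (pos w)) fun x ↦ T.Adj x w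
  have hnot : {x ∈ slab pos a (pos w) | ¬ T.Adj x w} = {x ∈ slab pos a (pos w) | T.Adj w x} := by
    refine filter_congr fun x hx ↦ (hT.2 w x ?_).symm
    rintro rfl
    simp at hx
  rw [hnot, card_slab pos a (pos w).isLt.le] at hsplit
  omega

open Classical in
theorem IsMedianOrder.sub_le_two_mul_card_inNeighbors_add {T : Digraph W} {pos : W ≃ Fin N}
    (h : IsMedianOrder T pos) (hT : T.IsTournament) {w : W} (a : ℕ) {b m : ℕ}
    (hw : w ∈ slab pos b (b + m)) :
    b - a ≤ 2 * #{x ∈ slab pos a b | T.Adj x w} + m := by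
  have hdeg := h.sub_le_two_mul_card_inNeighbors hT w a
  have hcover : #{x ∈ slab pos a (pos w) | T.Adj x w} ≤
      #{x ∈ slab pos a b | T.Adj x w} + #(slab pos b (pos w)) := by
    refine (card_le_card fun x hx ↦ ?_).trans (card_union_le _ _)
    simp only [mem_filter, mem_union, mem_slab] at hx ⊢
    grind
  rw [card_slab pos b (pos w).isLt.le] at hcover
  rw [mem_slab] at hw
  omega

open Classical in
theorem IsMedianOrder.exists_dense_block {T : Digraph W} {pos : W ≃ Fin N}
    (h : IsMedianOrder T pos) (hT : T.IsTournament) {b l m q : ℕ} {X : Finset W} {p : ℝ}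
    (hX : X ⊆ slab pos b (b + m)) (hq : 0 < q) (hqb : q * l ≤ b)
    (hm : m ≤ (1 - 2 * p) * (q * l)) :
    ∃ a, b - q * l ≤ a ∧ a + l ≤ b ∧
      p * #X * l ≤ ∑ x ∈ slab pos a (a + l), (#{w ∈ X | T.Adj x w} : ℝ) := by
  set a₀ := b - q * l
  have ha₀ : a₀ + q * l = b := Nat.sub_add_cancel hqb
  have hdeg (w : W) (hw : w ∈ X) : p * (q * l) ≤ #{x ∈ slab pos a₀ b | T.Adj x w} := by
    have := h.sub_le_two_mul_card_inNeighbors_add hT a₀ (hX hw)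
    rw [← ha₀, Nat.add_sub_cancel_left, ha₀, ← Nat.cast_le (α := ℝ)] at this
    push_cast at this
    linarith
  have hblocks : ∑ _j ∈ range q, p * #X * l ≤ ∑ j ∈ range q,
      ∑ x ∈ slab pos (a₀ + j * l) (a₀ + j * l + l), (#{w ∈ X | T.Adj x w} : ℝ) := by
    rw [← sum_slab_mul, ha₀]
    calc ∑ _j ∈ range q, p * #X * l = #X • (p * (q * l)) := by
          simp only [sum_const, card_range, nsmul_eq_mul]
          ring
      _ ≤ ∑ w ∈ X, (#{x ∈ slab pos a₀ b | T.Adj x w} : ℝ) := card_nsmul_le_sum _ _ _ hdeg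
      _ = ∑ x ∈ slab pos a₀ b, (#{w ∈ X | T.Adj x w} : ℝ) := mod_cast
        (sum_card_bipartiteAbove_eq_sum_card_bipartiteBelow T.Adj).symm
  obtain ⟨j, hj, hle⟩ := exists_le_of_sum_le (nonempty_range_iff.2 hq.ne') hblocks
  have hjq : (j + 1) * l ≤ q * l := Nat.mul_le_mul_right l (mem_range.1 hj)
  rw [Nat.succ_mul] at hjq
  exact ⟨a₀ + j * l, by omega, by omega, hle⟩

end MedianOrder

section BadTuples

variable {α V E : Type*} {Bad : Finset α → Prop} {X : Finset α} {c : ℝ}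

open Classical in
/-- The number of `r`-tuples from `X` that extend `Y` to a bad set. -/
noncomputable def badCount (Bad : Finset α → Prop) (X : Finset α) (r : ℕ) (Y : Finset α) : ℕ :=
  #{f ∈ Fintype.piFinset fun _ : Fin r ↦ X | Bad (Y ∪ univ.image f)}

open Classical in
theorem badCount_succ (Bad : Finset α → Prop) (X : Finset α) (r : ℕ) (Y : Finset α) :
    badCount Bad X (r + 1) Y = ∑ x ∈ X, badCount Bad X r (insert x Y) := by
  simp_rw [badCount, card_filter]
  rw [← sum_product']
  refine (sum_equiv (Fin.consEquiv fun _ ↦ α) (fun p ↦ ?_) fun p _ ↦ ?_).symm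
  · simp [Fin.consEquiv, Fin.forall_fin_succ]
  · have : insert p.1 Y ∪ univ.image p.2 = Y ∪ univ.image (Fin.consEquiv (fun _ ↦ α) p) := by
      ext y
      simp [Fin.consEquiv, Fin.exists_fin_succ, eq_comm, or_left_comm]
    rw [this]

open Classical in
theorem badCount_eq_card_pow (hBad : Monotone Bad) (r : ℕ) {Y : Finset α} (hY : Bad Y) :
    badCount Bad X r Y = #X ^ r := by
  rw [badCount, filter_true_of_mem fun f _ ↦ hBad subset_union_left hY,
    Fintype.card_piFinset_const]

/-- `Y` is safe if fewer than `c ^ r` of its extensions by `r`-tuples from `X` are bad; this is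
the invariant of a greedy embedding in which `r` vertices of an edge remain to be placed. -/
def IsSafe (Bad : Finset α → Prop) (X : Finset α) (c : ℝ) (r : ℕ) (Y : Finset α) : Prop :=
  badCount Bad X r Y < c ^ r

theorem IsSafe.not_bad {r : ℕ} {Y : Finset α} (h : IsSafe Bad X c r Y) (hBad : Monotone Bad)
    (hc : 0 ≤ c) (hcX : c ≤ #X) : ¬ Bad Y := by
  intro hY
  rw [IsSafe, badCount_eq_card_pow hBad r hY, Nat.cast_pow] at h
  exact h.not_ge (pow_le_pow_left₀ hc hcX r)

open Classical in
theorem IsSafe.card_not_isSafe_insert_le {r : ℕ} {Y : Finset α} (h : IsSafe Bad X c (r + 1) Y)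
    (hc : 0 < c) : #{x ∈ X | ¬ IsSafe Bad X c r (insert x Y)} ≤ c := by
  set U := {x ∈ X | ¬ IsSafe Bad X c r (insert x Y)}
  refine le_of_mul_le_mul_right ?_ (pow_pos hc r)
  calc #U * c ^ r = #U • c ^ r := (nsmul_eq_mul _ _).symm
    _ ≤ ∑ x ∈ U, (badCount Bad X r (insert x Y) : ℝ) :=
      card_nsmul_le_sum _ _ _ fun _ hx ↦ not_lt.1 (mem_filter.1 hx).2
    _ ≤ ∑ x ∈ X, (badCount Bad X r (insert x Y) : ℝ) :=
      sum_le_sum_of_subset_of_nonneg (filter_subset _ _) fun _ _ _ ↦ Nat.cast_nonneg _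
    _ = badCount Bad X (r + 1) Y := by rw [badCount_succ, Nat.cast_sum]
    _ ≤ c * c ^ r := by rw [← pow_succ']; exact h.le

open Classical in
theorem exists_forall_isSafe_insert (hc : 0 < c) {F : Finset E} {r : E → ℕ} {Y : E → Finset α}
    (hsafe : ∀ e ∈ F, IsSafe Bad X c (r e + 1) (Y e)) {C U : Finset α} (hCX : C ⊆ X)
    (hC : #U + #F * c < #C) :
    ∃ x ∈ C, x ∉ U ∧ ∀ e ∈ F, IsSafe Bad X c (r e) (insert x (Y e)) := by
  set B := F.biUnion fun e ↦ {x ∈ X | ¬ IsSafe Bad X c (r e) (insert x (Y e))}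
  have hBcard : (#B : ℝ) ≤ #F * c := by
    rw [← nsmul_eq_mul]
    calc (#B : ℝ) ≤ ∑ e ∈ F, (#{x ∈ X | ¬ IsSafe Bad X c (r e) (insert x (Y e))} : ℝ) :=
        mod_cast card_biUnion_le
      _ ≤ #F • c := sum_le_card_nsmul _ _ _ fun e he ↦ (hsafe e he).card_not_isSafe_insert_le hc
  have hUB : #(U ∪ B) < #C := by
    have : (#(U ∪ B) : ℝ) ≤ #U + #B := mod_cast card_union_le U B
    exact_mod_cast (by linarith : (#(U ∪ B) : ℝ) < #C)
  obtain ⟨x, hxC, hx⟩ := exists_mem_notMem_of_card_lt_card hUB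
  rw [mem_union, not_or] at hx
  refine ⟨x, hxC, hx.1, fun e he ↦ by_contra fun hnot ↦ hx.2 ?_⟩
  exact mem_biUnion.2 ⟨e, he, mem_filter.2 ⟨hCX hxC, hnot⟩⟩

open Classical in
/-- A state of the greedy embedding: the vertices in `S` have been placed, each in its candidate
set, and all edges `e w` with `w ∈ F` are still safe. -/
structure IsSafeEmbedding (Bad : Finset α → Prop) (X : Finset α) (c : ℝ) (r : ℕ) (F : Finset E)
    (e : E → Finset V) (C : V → Finset α) (S : Finset V) (φ : V → α) : Prop where
  injOn : Set.InjOn φ S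
  mem : ∀ v ∈ S, φ v ∈ C v
  isSafe : ∀ w ∈ F, IsSafe Bad X c (r - #(e w ∩ S)) ((e w ∩ S).image φ)

open Classical in
theorem IsSafeEmbedding.exists_update {r : ℕ} {F : Finset E} {e : E → Finset V}
    {C : V → Finset α} {S : Finset V} {φ : V → α} (h : IsSafeEmbedding Bad X c r F e C S φ)
    (hc : 0 < c) (her : ∀ w ∈ F, #(e w) ≤ r) {v : V} (hv : v ∉ S) (hCX : C v ⊆ X)
    (hC : #S + #{w ∈ F | v ∈ e w} * c < #(C v)) :
    ∃ x, IsSafeEmbedding Bad X c r F e C (insert v S) (Function.update φ v x) := by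
  have image_update (x : α) (s : Finset V) (hs : s ⊆ S) :
      s.image (Function.update φ v x) = s.image φ :=
    image_congr fun u hu ↦ Function.update_of_ne (by rintro rfl; exact hv (hs hu)) _ _
  have hlt {w : E} (hw : w ∈ F) (hvw : v ∈ e w) : #(e w ∩ S) + 1 ≤ r := by
    rw [← card_insert_of_notMem fun hmem ↦ hv (mem_of_mem_inter_right hmem)]
    exact (card_le_card (insert_subset hvw inter_subset_left)).trans (her w hw)
  obtain ⟨x, hxC, hxS, hx⟩ := exists_forall_isSafe_insert (Bad := Bad) (U := S.image φ) hc
    (F := {w ∈ F | v ∈ e w}) (r := fun w ↦ r - (#(e w ∩ S) + 1))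
    (Y := fun w ↦ (e w ∩ S).image φ)
    (fun w hw ↦ by
      obtain ⟨hw, hvw⟩ := mem_filter.1 hw
      have := h.isSafe w hw
      rwa [← Nat.sub_add_cancel (Nat.le_sub_of_add_le' (hlt hw hvw)), Nat.sub_sub] at this) hCX
    (by rwa [card_image_of_injOn h.injOn])
  refine ⟨x, ?_, fun u hu ↦ ?_, fun w hw ↦ ?_⟩
  · rw [coe_insert, Set.injOn_insert (mod_cast hv), ← coe_image, image_update x S subset_rfl]
    refine ⟨h.injOn.congr fun u hu ↦ ?_, by simpa using hxS⟩
    exact (Function.update_of_ne (by rintro rfl; exact hv hu) _ _).symm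
  · obtain rfl | huv := eq_or_ne u v
    · simpa using hxC
    · simpa [huv] using h.mem u ((mem_insert.1 hu).resolve_left huv)
  · by_cases hvw : v ∈ e w
    · rw [inter_insert_of_mem hvw, card_insert_of_notMem (by simp [hv]), image_insert,
        image_update x _ inter_subset_right, Function.update_self]
      exact hx w (mem_filter.2 ⟨hw, hvw⟩)
    · rw [inter_insert_of_notMem hvw, image_update x _ inter_subset_right]
      exact h.isSafe w hw

open Classical in
theorem exists_injOn_forall_not_bad [Nonempty α] (hBad : Monotone Bad) (hc : 0 < c)
    (hcX : c ≤ #X) {S : Finset V} {F : Finset E} {e : E → Finset V} {r Δ : ℕ}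
    (heS : ∀ w ∈ F, e w ⊆ S) (her : ∀ w ∈ F, #(e w) ≤ r)
    (hdeg : ∀ v ∈ S, #{w ∈ F | v ∈ e w} ≤ Δ) (hbad : ∀ w ∈ F, IsSafe Bad X c r ∅)
    {C : V → Finset α} (hCX : ∀ v ∈ S, C v ⊆ X) (hC : ∀ v ∈ S, #S + Δ * c ≤ #(C v)) :
    ∃ φ : V → α, Set.InjOn φ S ∧ (∀ v ∈ S, φ v ∈ C v) ∧ ∀ w ∈ F, ¬ Bad ((e w).image φ) := by
  obtain ⟨φ, hφ⟩ : ∃ φ, IsSafeEmbedding Bad X c r F e C S φ := by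
    suffices ∀ S' ⊆ S, ∃ φ, IsSafeEmbedding Bad X c r F e C S' φ from this S subset_rfl
    intro S' hS'
    induction S' using Finset.induction_on with
    | empty => exact ⟨fun _ ↦ Classical.arbitrary α, by simp, by simp, by simpa using hbad⟩
    | insert v S' hv ih =>
      obtain ⟨hvS, hS'⟩ := insert_subset_iff.1 hS'
      obtain ⟨φ, hφ⟩ := ih hS'
      have hlt : #S' + #{w ∈ F | v ∈ e w} * c < #(C v) := by
        have hcard : (#S' : ℝ) < #S :=
          mod_cast card_lt_card ((ssubset_iff_of_subset hS').2 ⟨v, hvS, hv⟩)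
        have hΔ : #{w ∈ F | v ∈ e w} * c ≤ Δ * c := by gcongr; exact hdeg v hvS
        linarith [hC v hvS]
      obtain ⟨x, hx⟩ := hφ.exists_update hc her hv (hCX v hvS) hlt
      exact ⟨_, hx⟩
  refine ⟨φ, hφ.injOn, hφ.mem, fun w hw ↦ ?_⟩
  have := hφ.isSafe w hw
  rw [inter_eq_left.2 (heS w hw)] at this
  exact this.not_bad hBad hc.le hcX

end BadTuples

section DependentRandomChoice

variable {α β : Type*}

theorem pow_mul_card_le_sum_pow {s : Finset α} {f : α → ℝ} {c : ℝ} (hc : 0 ≤ c)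
    (hf : ∀ i ∈ s, 0 ≤ f i) (h : c * #s ≤ ∑ i ∈ s, f i) (n : ℕ) :
    c ^ n * #s ≤ ∑ i ∈ s, f i ^ n := by
  obtain rfl | hs := s.eq_empty_or_nonempty
  · simp
  have hpos : (0 : ℝ) < #s := mod_cast hs.card_pos
  have hmean := Real.pow_arith_mean_le_arith_mean_pow s (fun _ ↦ (#s : ℝ)⁻¹) f
    (fun _ _ ↦ by positivity) (by simp [hpos.ne']) hf n
  rw [← mul_sum, ← mul_sum] at hmean
  rw [mul_comm, ← le_inv_mul_iff₀ hpos]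
  exact (pow_le_pow_left₀ hc ((le_inv_mul_iff₀ hpos).2 (by linarith)) n).trans hmean

open Classical in
/-- The elements of `B` that are related to every element of `Y`. -/
noncomputable def commonNeighbors (R : α → β → Prop) (B : Finset β) (Y : Finset α) : Finset β :=
  {b ∈ B | ∀ y ∈ Y, R y b}

@[simp]
theorem mem_commonNeighbors {R : α → β → Prop} {B : Finset β} {Y : Finset α} {b : β} :
    b ∈ commonNeighbors R B Y ↔ b ∈ B ∧ ∀ y ∈ Y, R y b := by
  simp [commonNeighbors]

theorem commonNeighbors_antitone (R : α → β → Prop) (B : Finset β) :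
    Antitone (commonNeighbors R B) := fun _ _ h _ ↦ by
  simp only [mem_commonNeighbors]
  exact fun hb ↦ ⟨hb.1, fun y hy ↦ hb.2 y (h hy)⟩

/-- `Y` has fewer than `m` common neighbors in `B`; these are the bad sets of the embedding. -/
def HasFewCommonNeighbors (R : α → β → Prop) (B : Finset β) (m : ℝ) (Y : Finset α) : Prop :=
  #(commonNeighbors R B Y) < m

theorem monotone_hasFewCommonNeighbors (R : α → β → Prop) (B : Finset β) (m : ℝ) :
    Monotone (HasFewCommonNeighbors R B m) :=
  fun _ _ h ↦ lt_of_le_of_lt (mod_cast card_le_card (commonNeighbors_antitone R B h))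

open Classical in
theorem sum_card_filter_forall (R : α → β → Prop) (A : Finset α) (B : Finset β) (t : ℕ) :
    ∑ s ∈ Fintype.piFinset fun _ : Fin t ↦ B, #{a ∈ A | ∀ i, R a (s i)} =
      ∑ a ∈ A, #{b ∈ B | R a b} ^ t := by
  have hpow (a : α) : #{b ∈ B | R a b} ^ t =
      #{s ∈ Fintype.piFinset fun _ : Fin t ↦ B | ∀ i, R a (s i)} := by
    rw [← Fintype.card_piFinset_const]
    congr 1
    ext s
    simp [forall_and]
  simp_rw [hpow]
  exact sum_card_bipartiteAbove_eq_sum_card_bipartiteBelow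
    fun (s : Fin t → β) a ↦ ∀ i, R a (s i)

open Classical in
theorem sum_badCount_le (R : α → β → Prop) (A : Finset α) (B : Finset β) (d t : ℕ) {m : ℝ}
    (hm : 0 ≤ m) :
    ∑ s ∈ Fintype.piFinset fun _ : Fin t ↦ B,
      (badCount (HasFewCommonNeighbors R B m) {a ∈ A | ∀ i, R a (s i)} d ∅ : ℝ) ≤
      #A ^ d * m ^ t := by
  set F : Finset (Fin d → α) :=
    {f ∈ Fintype.piFinset fun _ ↦ A | HasFewCommonNeighbors R B m (univ.image f)}
  have hbad (s : Fin t → β) :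
      badCount (HasFewCommonNeighbors R B m) {a ∈ A | ∀ i, R a (s i)} d ∅ =
        #{f ∈ F | ∀ i j, R (f j) (s i)} := by
    rw [badCount]
    congr 1
    ext f
    simp only [F, mem_filter, Fintype.mem_piFinset, empty_union]
    grind
  have hcommon (f : Fin d → α) :
      {b ∈ B | ∀ j, R (f j) b} = commonNeighbors R B (univ.image f) := by
    simp [commonNeighbors]
  simp_rw [hbad]
  calc ∑ s ∈ Fintype.piFinset fun _ : Fin t ↦ B, (#{f ∈ F | ∀ i j, R (f j) (s i)} : ℝ)
      = ∑ f ∈ F, (#(commonNeighbors R B (univ.image f)) : ℝ) ^ t := by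
        simp_rw [← hcommon]
        norm_cast
        convert sum_card_filter_forall (fun (f : Fin d → α) b ↦ ∀ j, R (f j) b) F B t
    _ ≤ #F • m ^ t := sum_le_card_nsmul _ _ _ fun f hf ↦
      pow_le_pow_left₀ (Nat.cast_nonneg _) (mem_filter.1 hf).2.le t
    _ ≤ #A ^ d * m ^ t := by
      rw [nsmul_eq_mul]
      gcongr
      exact_mod_cast (card_filter_le _ _).trans_eq (Fintype.card_piFinset_const A d)

open Classical in
theorem pow_mul_le_sum_card_filter_forall_pow {R : α → β → Prop} {A : Finset α} {B : Finset β}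
    {p : ℝ} (hp : 0 ≤ p) (hdens : p * #B * #A ≤ ∑ a ∈ A, (#{b ∈ B | R a b} : ℝ)) (d t : ℕ) :
    (p ^ t * #A) ^ d * #(Fintype.piFinset fun _ : Fin t ↦ B) ≤
      ∑ s ∈ Fintype.piFinset fun _ : Fin t ↦ B, (#{a ∈ A | ∀ i, R a (s i)} : ℝ) ^ d := by
  refine pow_mul_card_le_sum_pow (by positivity) (fun _ _ ↦ Nat.cast_nonneg _) ?_ d
  have hpow := pow_mul_card_le_sum_pow (by positivity) (fun _ _ ↦ Nat.cast_nonneg _) hdens t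
  have hcount : ∑ s ∈ Fintype.piFinset fun _ : Fin t ↦ B, (#{a ∈ A | ∀ i, R a (s i)} : ℝ) =
      ∑ a ∈ A, (#{b ∈ B | R a b} : ℝ) ^ t :=
    mod_cast sum_card_filter_forall R A B t
  rwa [hcount, Fintype.card_piFinset_const, Nat.cast_pow, mul_right_comm, ← mul_pow]

open Classical in
theorem exists_subset_badCount_hasFewCommonNeighbors_le {R : α → β → Prop} {A : Finset α}
    {B : Finset β} (hB : B.Nonempty) {d : ℕ} (hd : 1 ≤ d) {p τ : ℝ} (hp : 0 < p) (hτ : 0 < τ)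
    (hdens : p * #B * #A ≤ ∑ a ∈ A, (#{b ∈ B | R a b} : ℝ)) (t : ℕ) :
    ∃ X ⊆ A, p ^ t * #A / 2 ≤ #X ∧
      badCount (HasFewCommonNeighbors R B (τ * #B)) X d ∅ ≤
        2 * (τ / p ^ d) ^ t * #X ^ d := by
  set Ω := Fintype.piFinset fun _ : Fin t ↦ B
  set X : (Fin t → β) → Finset α := fun s ↦ {a ∈ A | ∀ i, R a (s i)}
  set bad : (Fin t → β) → ℝ := fun s ↦
    badCount (HasFewCommonNeighbors R B (τ * #B)) (X s) d ∅
  have hΩcard : (#Ω : ℝ) = #B ^ t := mod_cast Fintype.card_piFinset_const B t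
  have hmoment : (p ^ t * #A) ^ d * #Ω ≤ ∑ s ∈ Ω, (#(X s) : ℝ) ^ d :=
    pow_mul_le_sum_card_filter_forall_pow hp.le hdens d t
  have hbad : ∑ s ∈ Ω, bad s ≤ #A ^ d * (τ * #B) ^ t := sum_badCount_le R A B d t (by positivity)
  -- `M` balances the two sides: `M * 𝔼[bad]` is at most half of `(p ^ t * #A) ^ d`.
  set M : ℝ := (p ^ d / τ) ^ t / 2 with hM
  have hMpos : 0 < M := by positivity
  obtain ⟨s, -, hs⟩ : ∃ s ∈ Ω, (p ^ t * #A) ^ d / 2 ≤ #(X s) ^ d - M * bad s := by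
    refine exists_le_of_sum_le (Fintype.piFinset_nonempty.2 fun _ ↦ hB) ?_
    have hMbad : M * (#A ^ d * (τ * #B) ^ t) = #Ω * ((p ^ t * #A) ^ d / 2) := by
      rw [hM, hΩcard, div_pow, mul_pow, mul_pow, pow_right_comm]
      field_simp
    rw [sum_const, nsmul_eq_mul, sum_sub_distrib, ← mul_sum]
    linarith [mul_le_mul_of_nonneg_left hbad hMpos.le]
  refine ⟨X s, filter_subset _ _, ?_, ?_⟩
  · refine le_of_pow_le_pow_left₀ (n := d) (by omega) (by positivity) ?_
    calc (p ^ t * #A / 2) ^ d = (p ^ t * #A) ^ d / 2 ^ d := div_pow _ _ _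
      _ ≤ (p ^ t * #A) ^ d / 2 := by
        gcongr
        exact le_self_pow₀ one_le_two (by omega)
      _ ≤ #(X s) ^ d := hs.trans (sub_le_self _ (by positivity))
  · have hMinv : 2 * (τ / p ^ d) ^ t = M⁻¹ := by rw [hM, inv_div, ← inv_div τ, inv_pow]; field_simp
    rw [hMinv, le_inv_mul_iff₀ hMpos]
    have : 0 ≤ (p ^ t * #A) ^ d / 2 := by positivity
    linarith

end DependentRandomChoice

section GradedEmbedding

variable {V W : Type*} [Fintype V] [Fintype W] {G : Digraph V} {T : Digraph W} {lev : V → ℕ}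
  {N : ℕ} {pos : W ≃ Fin N} {d K q t : ℕ} {p τ : ℝ}

/-- The vertices of level `i`. -/
def level (lev : V → ℕ) (i : ℕ) : Finset V := {v | lev v = i}

@[simp]
theorem mem_level {i : ℕ} {v : V} : v ∈ level lev i ↔ lev v = i := by simp [level]

open Classical in
/-- `lev` grades `G`, whose in- and out-degrees are at most `d`; moreover each level is at most
`d` times as large as the preceding one. -/
structure IsBoundedGrading (G : Digraph V) (lev : V → ℕ) (d : ℕ) : Prop where
  lev_eq {u v : V} : G.Adj u v → lev v = lev u + 1
  card_inNeighbors_le (v : V) : #{u | G.Adj u v} ≤ d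
  card_outNeighbors_le (u : V) : #{v | G.Adj u v} ≤ d
  card_level_succ_le (i : ℕ) : #(level lev (i + 1)) ≤ d * #(level lev i)

theorem IsBoundedGrading.level_nonempty_of_le (hG : IsBoundedGrading G lev d) {i j : ℕ}
    (hij : i ≤ j) (hj : (level lev j).Nonempty) : (level lev i).Nonempty := by
  induction hij using Nat.decreasingInduction with
  | self => exact hj
  | of_succ i _ ih =>
    rw [← card_pos] at ih ⊢
    exact Nat.pos_of_mul_pos_left (ih.trans_le (hG.card_level_succ_le i))

open Classical in
theorem IsBoundedGrading.of_exists_adj (hlev : ∀ {u v}, G.Adj u v → lev v = lev u + 1)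
    (hin : ∀ v, #{u | G.Adj u v} ≤ d) (hout : ∀ u, #{v | G.Adj u v} ≤ d)
    (hpred : ∀ v, 0 < lev v → ∃ u, G.Adj u v) : IsBoundedGrading G lev d where
  lev_eq := hlev
  card_inNeighbors_le := hin
  card_outNeighbors_le := hout
  card_level_succ_le i := by
    have hsub : level lev (i + 1) ⊆ (level lev i).biUnion fun u ↦ {v | G.Adj u v} := by
      intro v hv
      rw [mem_level] at hv
      obtain ⟨u, hu⟩ := hpred v (by omega)
      have := hlev hu
      exact mem_biUnion.2 ⟨u, mem_level.2 (by omega), by simpa using hu⟩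
    rw [mul_comm]
    exact (card_le_card hsub).trans (card_biUnion_le_card_mul _ _ d fun u _ ↦ hout u)

/-- `φ` embeds the part of `G` of level at least `i` into the part of `T` at positions at
least `a`. -/
structure IsPartialCopy (G : Digraph V) (lev : V → ℕ) (T : Digraph W) (pos : W ≃ Fin N)
    (i a : ℕ) (φ : V → W) : Prop where
  injOn : Set.InjOn φ {v | i ≤ lev v}
  le_pos {v : V} : i ≤ lev v → a ≤ pos (φ v)
  adj {u v : V} : i ≤ lev u → G.Adj u v → T.Adj (φ u) (φ v)

theorem IsPartialCopy.extend {i a a' : ℕ} {φ ψ : V → W}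
    (hφ : IsPartialCopy G lev T pos (i + 1) a' φ) (hG : IsBoundedGrading G lev d) (haa' : a ≤ a')
    (hψ : Set.InjOn ψ (level lev i)) (hmem : ∀ v ∈ level lev i, ψ v ∈ slab pos a a')
    (hadj : ∀ u ∈ level lev i, ∀ v, G.Adj u v → T.Adj (ψ u) (φ v)) :
    IsPartialCopy G lev T pos i a fun v ↦ if lev v = i then ψ v else φ v := by
  simp only [mem_level, mem_slab] at hmem hadj
  refine ⟨fun u hu v hv huv ↦ ?_, fun {v} hv ↦ ?_, fun {u v} hu huv ↦ ?_⟩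
  · simp only [Set.mem_ofPred_eq] at hu hv
    have hne {u v : V} (hu : lev u = i) (hv : i + 1 ≤ lev v) : ψ u ≠ φ v := by
      intro h
      have := hmem u hu
      have := hφ.le_pos hv
      rw [h] at *
      omega
    beta_reduce at huv
    split_ifs at huv with hui hvi hvi
    · exact hψ (by simpa using hui) (by simpa using hvi) huv
    · exact (hne hui (by omega) huv).elim
    · exact (hne hvi (by omega) huv.symm).elim
    · exact hφ.injOn (show i + 1 ≤ lev u by omega) (show i + 1 ≤ lev v by omega) huv
  · split_ifs with hvi
    · exact (hmem v hvi).1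
    · exact haa'.trans (hφ.le_pos (by omega))
  · have := hG.lev_eq huv
    rw [if_neg (show lev v ≠ i by omega)]
    split_ifs with hui
    · exact hadj u hui v huv
    · exact hφ.adj (by omega) huv

/-- The vertices of `G` of level at least `i` can be embedded at positions at least `a`, even if
each vertex of level `i` is restricted to a prescribed set of at least `τ * #X` vertices of `X`. -/
def IsFlexible (G : Digraph V) (lev : V → ℕ) (T : Digraph W) (pos : W ≃ Fin N) (τ : ℝ)
    (i a : ℕ) (X : Finset W) : Prop :=
  ∀ C : V → Finset W, (∀ v ∈ level lev i, C v ⊆ X ∧ τ * #X ≤ #(C v)) →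
    ∃ φ, IsPartialCopy G lev T pos i a φ ∧ ∀ v ∈ level lev i, φ v ∈ C v

open Classical in
theorem IsFlexible.of_succ {i a a' : ℕ} {X X' : Finset W}
    (h : IsFlexible G lev T pos τ (i + 1) a' X') (hG : IsBoundedGrading G lev d) (hd : 1 ≤ d)
    (hτ₀ : 0 < τ) (hτ₁ : τ ≤ 1) (hX : X.Nonempty) (hXa : X ⊆ slab pos a a')
    (hcard : #(level lev i) ≤ τ / 2 * #X)
    (hsafe : ∀ w ∈ level lev (i + 1),
      IsSafe (HasFewCommonNeighbors T.Adj X' (τ * #X')) X (τ / (2 * d) * #X) d ∅) :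
    IsFlexible G lev T pos τ i a X := by
  intro C hC
  have : Nonempty W := ⟨hX.choose⟩
  have hX₀ : (0 : ℝ) < #X := mod_cast hX.card_pos
  have hd₀ : (1 : ℝ) ≤ d := mod_cast hd
  have haa' : a ≤ a' := by
    have := mem_slab.1 (hXa hX.choose_spec)
    omega
  obtain ⟨ψ, hψinj, hψC, hψ⟩ := exists_injOn_forall_not_bad (X := X) (S := level lev i)
    (F := level lev (i + 1)) (e := fun w ↦ {u | G.Adj u w}) (Δ := d) (C := C)
    (monotone_hasFewCommonNeighbors T.Adj X' (τ * #X')) (c := τ / (2 * d) * #X) (by positivity)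
    (mul_le_of_le_one_left hX₀.le (div_le_one_of_le₀ (by linarith) (by positivity)))
    (fun w hw u hu ↦ by
      have := hG.lev_eq (mem_filter.1 hu).2
      simp only [mem_level] at hw ⊢
      omega)
    (fun w _ ↦ hG.card_inNeighbors_le w)
    (fun u _ ↦ (card_le_card fun v hv ↦ by simpa using (mem_filter.1 hv).2).trans
      (hG.card_outNeighbors_le u))
    hsafe (fun v hv ↦ (hC v hv).1) (fun v hv ↦ by
      have : d * (τ / (2 * d) * #X) = τ / 2 * #X := by field_simp
      linarith [(hC v hv).2])
  obtain ⟨φ, hφ, hφC⟩ := h (fun w ↦ commonNeighbors T.Adj X' (image ψ {u | G.Adj u w}))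
    fun w hw ↦ ⟨fun _ hx ↦ (mem_commonNeighbors.1 hx).1, not_lt.1 (hψ w hw)⟩
  refine ⟨_, hφ.extend hG haa' hψinj (fun v hv ↦ hXa ((hC v hv).1 (hψC v hv))) ?_, ?_⟩
  · intro u hu v huv
    have hv : v ∈ level lev (i + 1) := by simpa [mem_level.1 hu] using hG.lev_eq huv
    exact (mem_commonNeighbors.1 (hφC v hv)).2 _ (mem_image_of_mem ψ (by simpa using huv))
  · intro v hv
    rw [if_pos (mem_level.1 hv)]
    exact hψC v hv

/-- The inequalities between the parameters of the embedding: `p` is a density, `τ` the fraction of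
a host set that a candidate set retains, `t` the number of random choices, `K` the ratio between
the size of a slab and of the level it hosts, and `q` the number of blocks to choose from. -/
structure IsAdmissible (d K q t : ℕ) (p τ : ℝ) : Prop where
  one_le : 1 ≤ d
  p_pos : 0 < p
  p_le_one : p ≤ 1
  τ_pos : 0 < τ
  τ_le_one : τ ≤ 1
  bad_lt : 2 * (τ / p ^ d) ^ t < (τ / (2 * d)) ^ d
  one_le_mul : 1 ≤ τ / 4 * p ^ t * K
  le_mul : d ≤ (1 - 2 * p) * q

theorem IsAdmissible.q_pos (h : IsAdmissible d K q t p τ) : 0 < q := by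
  have := h.one_le
  refine Nat.pos_of_ne_zero ?_
  rintro rfl
  have := h.le_mul
  norm_num at this
  omega

theorem IsAdmissible.mul_card_level_succ_le (h : IsAdmissible d K q t p τ)
    (hG : IsBoundedGrading G lev d) (i : ℕ) :
    (K * #(level lev (i + 1)) : ℕ) ≤ (1 - 2 * p) * (q * (K * #(level lev i) : ℕ)) :=
  calc ((K * #(level lev (i + 1)) : ℕ) : ℝ) ≤ (K * (d * #(level lev i)) : ℕ) := by
        gcongr
        exact hG.card_level_succ_le i
    _ = d * (K * #(level lev i) : ℕ) := by rw [mul_left_comm, Nat.cast_mul]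
    _ ≤ (1 - 2 * p) * q * (K * #(level lev i) : ℕ) := by gcongr; exact h.le_mul
    _ = (1 - 2 * p) * (q * (K * #(level lev i) : ℕ)) := mul_assoc _ _ _

/-- The set `X` hosts level `i` of `G` in the slab starting at position `a`. -/
structure IsHost (G : Digraph V) (lev : V → ℕ) (T : Digraph W) (pos : W ≃ Fin N) (K : ℕ) (τ : ℝ)
    (i a : ℕ) (X : Finset W) : Prop where
  nonempty : X.Nonempty
  subset_slab : X ⊆ slab pos a (a + K * #(level lev i))
  card_level_le : #(level lev i) ≤ τ / 2 * #X
  isFlexible : IsFlexible G lev T pos τ i a X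

theorem IsHost.level_nonempty {i a : ℕ} {X : Finset W} (h : IsHost G lev T pos K τ i a X) :
    (level lev i).Nonempty := by
  rw [nonempty_iff_ne_empty]
  intro hempty
  obtain ⟨x, hx⟩ := h.nonempty
  have := mem_slab.1 (h.subset_slab hx)
  rw [hempty, card_empty] at this
  omega

theorem exists_isHost_top (hG : IsBoundedGrading G lev d) (hpar : IsAdmissible d K q t p τ)
    {i : ℕ} (hi : (level lev i).Nonempty) (htop : ∀ v, lev v ≤ i)
    (hN : K * #(level lev i) ≤ N) :
    ∃ X, IsHost G lev T pos K τ i (N - K * #(level lev i)) X := by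
  set a := N - K * #(level lev i)
  have haN : a + K * #(level lev i) = N := Nat.sub_add_cancel hN
  have hn : (0 : ℝ) < #(level lev i) := mod_cast hi.card_pos
  have hτ := hpar.τ_pos
  have hcard : #(level lev i) ≤ τ / 2 * #(slab pos a N) := by
    have hK : 1 ≤ τ / 2 * K := by
      have hp : τ * K * p ^ t ≤ τ * K :=
        mul_le_of_le_one_right (by positivity) (pow_le_one₀ hpar.p_pos.le hpar.p_le_one)
      have := mul_nonneg hτ.le K.cast_nonneg
      linarith [hpar.one_le_mul]
    rw [card_slab pos a le_rfl, ← haN, Nat.add_sub_cancel_left, Nat.cast_mul, ← mul_assoc]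
    exact le_mul_of_one_le_left hn.le hK
  have hX : (slab pos a N).Nonempty := by
    rw [← card_pos, ← Nat.cast_pos (α := ℝ)]
    exact pos_of_mul_pos_right (hn.trans_le hcard) (by positivity)
  have hlev (v : V) : ¬ i + 1 ≤ lev v := by
    have := htop v
    omega
  have hempty (v : V) : v ∉ level lev (i + 1) := fun hv ↦ hlev v (mem_level.1 hv).ge
  have ⟨x, _⟩ := hX
  have hflex : IsFlexible G lev T pos τ (i + 1) N ∅ := fun _ _ ↦
    ⟨fun _ ↦ x, ⟨fun v hv ↦ (hlev v hv).elim, fun hv ↦ (hlev _ hv).elim, fun hu ↦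
      (hlev _ hu).elim⟩, fun v hv ↦ (hempty v hv).elim⟩
  exact ⟨_, hX, haN.symm ▸ subset_rfl, hcard, hflex.of_succ hG hpar.one_le hτ hpar.τ_le_one hX
    subset_rfl hcard fun w hw ↦ (hempty w hw).elim⟩

theorem IsHost.exists_pred {i a' : ℕ} {X' : Finset W} (h : IsHost G lev T pos K τ (i + 1) a' X')
    (hpos : IsMedianOrder T pos) (hT : T.IsTournament) (hG : IsBoundedGrading G lev d)
    (hpar : IsAdmissible d K q t p τ) (ha' : q * K * #(level lev i) ≤ a') :
    ∃ a X, a' - q * K * #(level lev i) ≤ a ∧ IsHost G lev T pos K τ i a X := by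
  classical
  have hp := hpar.p_pos
  have hτ := hpar.τ_pos
  have hn : (0 : ℝ) < #(level lev i) :=
    mod_cast (hG.level_nonempty_of_le i.le_succ h.level_nonempty).card_pos
  have hX'₀ : (0 : ℝ) < #X' := mod_cast h.nonempty.card_pos
  rw [mul_assoc] at ha' ⊢
  set l := K * #(level lev i) with hl
  obtain ⟨a, haa', hla, hdens⟩ := hpos.exists_dense_block hT h.subset_slab hpar.q_pos ha'
    (hpar.mul_card_level_succ_le hG i)
  have hcardA : #(slab pos a (a + l)) = l := by
    obtain ⟨x, hx⟩ := h.nonempty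
    have := mem_slab.1 (h.subset_slab hx)
    have := (pos x).isLt
    rw [card_slab pos a (by omega), Nat.add_sub_cancel_left]
  obtain ⟨X, hXA, hXcard, hXbad⟩ := exists_subset_badCount_hasFewCommonNeighbors_le h.nonempty
    hpar.one_le hp hτ (by rwa [hcardA]) t
  rw [hcardA] at hXcard
  have hcard : #(level lev i) ≤ τ / 2 * #X := by
    calc (#(level lev i) : ℝ) ≤ τ / 4 * p ^ t * K * #(level lev i) :=
          le_mul_of_one_le_left hn.le hpar.one_le_mul
      _ = τ / 2 * (p ^ t * l / 2) := by rw [hl]; push_cast; ring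
      _ ≤ τ / 2 * #X := by gcongr
  have hX₀ : (0 : ℝ) < #X := pos_of_mul_pos_right (hn.trans_le hcard) (by positivity)
  have hsafe : IsSafe (HasFewCommonNeighbors T.Adj X' (τ * #X')) X
      (τ / (2 * d) * #X) d ∅ := by
    rw [IsSafe, mul_pow]
    exact hXbad.trans_lt (mul_lt_mul_of_pos_right hpar.bad_lt (by positivity))
  have hXne : X.Nonempty := card_pos.1 (mod_cast hX₀)
  exact ⟨a, X, haa', hXne, hXA, hcard, h.isFlexible.of_succ hG hpar.one_le hτ hpar.τ_le_one hXne
    (hXA.trans fun x ↦ by simp only [mem_slab]; omega) hcard fun _ _ ↦ hsafe⟩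

theorem exists_isHost_zero (hT : T.IsTournament) (hpos : IsMedianOrder T pos)
    (hG : IsBoundedGrading G lev d) (hpar : IsAdmissible d K q t p τ) [Nonempty V]
    (hN : q * K * Fintype.card V ≤ N) :
    ∃ a X, IsHost G lev T pos K τ 0 a X := by
  obtain ⟨top, htop⟩ := Finite.exists_max lev
  have hcardV : Fintype.card V = ∑ i ∈ range (lev top + 1), #(level lev i) :=
    card_eq_sum_card_fiberwise fun v _ ↦ by simpa [Nat.lt_succ_iff] using htop v
  suffices ∀ i ≤ lev top,
      ∃ a X, q * K * ∑ j ∈ range i, #(level lev j) ≤ a ∧ IsHost G lev T pos K τ i a X by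
    obtain ⟨a, X, -, h⟩ := this 0 (Nat.zero_le _)
    exact ⟨a, X, h⟩
  intro i hi
  induction hi using Nat.decreasingInduction with
  | self =>
    rw [hcardV, sum_range_succ, mul_add] at hN
    have hq := Nat.le_mul_of_pos_left (K * #(level lev (lev top))) hpar.q_pos
    rw [← mul_assoc] at hq
    obtain ⟨X, hX⟩ := exists_isHost_top (T := T) (pos := pos) hG hpar ⟨top, by simp⟩ htop
      (by omega)
    exact ⟨_, X, by omega, hX⟩
  | of_succ i _ ih =>
    obtain ⟨a', X', ha', hX'⟩ := ih
    rw [sum_range_succ, mul_add] at ha'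
    obtain ⟨a, X, haa', hX⟩ := hX'.exists_pred hpos hT hG hpar (by omega)
    exact ⟨a, X, by omega, hX⟩

theorem containsCopy_of_isAdmissible (hT : T.IsTournament) (hG : IsBoundedGrading G lev d)
    (hpar : IsAdmissible d K q t p τ) (hN : q * K * Fintype.card V ≤ Fintype.card W) :
    T.ContainsCopy G := by
  obtain hV | hV := isEmpty_or_nonempty V
  · exact ⟨hV.elim, fun u ↦ hV.elim u, fun u ↦ hV.elim u⟩
  obtain ⟨pos, hpos⟩ := exists_isMedianOrder T rfl
  obtain ⟨a, X, hX⟩ := exists_isHost_zero hT hpos hG hpar hN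
  obtain ⟨φ, hφ, -⟩ := hX.isFlexible (fun _ ↦ X) fun _ _ ↦
    ⟨subset_rfl, mul_le_of_le_one_left (Nat.cast_nonneg _) hpar.τ_le_one⟩
  exact ⟨φ, fun u v ↦ hφ.injOn (Nat.zero_le _) (Nat.zero_le _), fun _ _ ↦ hφ.adj (Nat.zero_le _)⟩

end GradedEmbedding

theorem half_le_one_sub_pow {x : ℝ} {m : ℕ} (hx : x ≤ 2) (hmx : m * x ≤ 1 / 2) :
    1 / 2 ≤ (1 - x) ^ m := by
  have := one_add_mul_le_pow (neg_le_neg hx) m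
  rw [← sub_eq_add_neg] at this
  linarith

theorem exists_two_pow_mem_Ioc {d : ℕ} (hd : 1 ≤ d) :
    ∃ t ≤ 6 * d, 8 * d * 4 ^ d < 2 ^ t ∧ 2 ^ t ≤ 16 * d * 4 ^ d := by
  have hne : 16 * d * 4 ^ d ≠ 0 := by positivity
  refine ⟨Nat.log 2 (16 * d * 4 ^ d), ?_, ?_, Nat.pow_log_le_self 2 hne⟩
  · rw [← Nat.pow_le_pow_iff_right one_lt_two]
    calc 2 ^ Nat.log 2 (16 * d * 4 ^ d) ≤ 16 * d * 4 ^ d := Nat.pow_log_le_self 2 hne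
      _ ≤ 16 ^ d * 4 ^ d := by
        gcongr
        exact Nat.mul_le_pow (by norm_num) d
      _ = 2 ^ (6 * d) := by rw [← mul_pow, pow_mul]; norm_num
  · have := Nat.lt_pow_succ_log_self one_lt_two (16 * d * 4 ^ d)
    rw [pow_succ] at this
    linarith

theorem two_mul_half_pow_pow_lt {d t : ℕ} {τ : ℝ} (hd : 1 ≤ d) (ht : 8 * d * 4 ^ d < 2 ^ t)
    (hτ : 1 / (2 * 4 ^ d) ≤ τ) : 2 * ((1 / 2 : ℝ) ^ d) ^ t < (τ / (2 * d)) ^ d := by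
  have ht : (8 * d * 4 ^ d : ℝ) < 2 ^ t := mod_cast ht
  calc 2 * ((1 / 2 : ℝ) ^ d) ^ t ≤ 2 ^ d * ((1 / 2 : ℝ) ^ d) ^ t := by
        gcongr
        exact le_self_pow₀ one_le_two (by omega)
    _ = (2 / 2 ^ t) ^ d := by rw [pow_right_comm, ← mul_pow, one_div_pow, mul_one_div]
    _ < (1 / (2 * 4 ^ d) / (2 * d)) ^ d := by
      refine pow_lt_pow_left₀ ?_ (by positivity) (by omega)
      rw [div_div, div_lt_div_iff₀ (by positivity) (by positivity)]
      linarith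
    _ ≤ (τ / (2 * d)) ^ d := by gcongr

theorem exists_isAdmissible {d : ℕ} (hd : 1 ≤ d) :
    ∃ p τ t, IsAdmissible d (256 * d * 16 ^ d) (12 * d ^ 2) t p τ := by
  have hd₁ : (1 : ℝ) ≤ d := mod_cast hd
  obtain ⟨t, htd, hlt, hle⟩ := exists_two_pow_mem_Ioc hd
  have hle : (2 ^ t : ℝ) ≤ 16 * d * 4 ^ d := mod_cast hle
  set c : ℝ := 1 - 1 / (12 * d) with hc
  have hd' : 1 / (12 * d : ℝ) ≤ 1 / 12 := by gcongr; linarith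
  have hc₀ : 0 < c := by linarith
  have hc₁ : c ≤ 1 := sub_le_self 1 (by positivity)
  have hhalf {m : ℕ} (hm : m ≤ 6 * d) : 1 / 2 ≤ c ^ m := by
    refine half_le_one_sub_pow (by linarith) ?_
    have : (m : ℝ) ≤ 6 * d := mod_cast hm
    rw [mul_one_div, div_le_div_iff₀ (by positivity) two_pos]
    linarith
  have hτ : 1 / (2 * 4 ^ d) ≤ (c / 4) ^ d := by
    rw [div_pow, ← div_div]
    gcongr
    exact hhalf (by omega)
  have hp : 1 / (32 * d * 4 ^ d) ≤ (c / 2) ^ t :=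
    calc 1 / (32 * d * 4 ^ d : ℝ) = 1 / 2 / (16 * d * 4 ^ d) := by ring
      _ ≤ c ^ t / 2 ^ t := by gcongr; exact hhalf htd
      _ = (c / 2) ^ t := (div_pow _ _ _).symm
  refine ⟨c / 2, (c / 4) ^ d, t, hd, by positivity, by linarith, by positivity,
    pow_le_one₀ (by positivity) (by linarith), ?_, ?_, ?_⟩
  · have hratio : (c / 4) ^ d / (c / 2) ^ d = (1 / 2) ^ d := by
      rw [← div_pow]
      congr 1
      field_simp
      norm_num
    rw [hratio]
    exact two_mul_half_pow_pow_lt hd hlt hτ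
  · calc (1 : ℝ) = 1 / (2 * 4 ^ d) / 4 * (1 / (32 * d * 4 ^ d)) * (256 * d * (4 * 4) ^ d) := by
          rw [mul_pow]
          field_simp
          norm_num
      _ ≤ (c / 4) ^ d / 4 * (c / 2) ^ t * (256 * d * (4 * 4) ^ d) := by gcongr
      _ = (c / 4) ^ d / 4 * (c / 2) ^ t * (256 * d * 16 ^ d : ℕ) := by norm_num
  · rw [hc]
    push_cast
    apply le_of_eq
    field_simp
    ring

theorem IsBoundedGrading.containsCopy {V W : Type*} [Fintype V] [Fintype W] {G : Digraph V}
    {lev : V → ℕ} {d : ℕ} (hG : IsBoundedGrading G lev d) (hd : 1 ≤ d) {T : Digraph W}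
    (hT : T.IsTournament) (hN : 3072 * d ^ 3 * 2 ^ (4 * d) * Fintype.card V ≤ Fintype.card W) :
    T.ContainsCopy G := by
  obtain ⟨p, τ, t, hpar⟩ := exists_isAdmissible hd
  refine containsCopy_of_isAdmissible hT hG hpar (le_of_eq_of_le ?_ hN)
  rw [pow_mul 2 4]
  ring

theorem grid_oriented_ramsey_general {V : Type*} [Fintype V] {G : Digraph V} {lev : V → ℕ} {d : ℕ}
    (hG : IsBoundedGrading G lev d) (hd : 1 ≤ d) :
    orientedRamsey G ≤ 3072 * d ^ 3 * 2 ^ (4 * d) * Fintype.card V :=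
  Nat.sInf_le fun _ hT ↦ hG.containsCopy hd hT (Fintype.card_fin _).ge

section Grid

variable {d k : ℕ}

theorem sum_val_eq_of_gridDigraph_adj {u v : Fin d → Fin k} (h : (gridDigraph d k).Adj u v) :
    ∑ i, (v i : ℕ) = ∑ i, (u i : ℕ) + 1 := by
  obtain ⟨i, hi, hne⟩ := h
  have hrest : ∑ j ∈ univ.erase i, (v j : ℕ) = ∑ j ∈ univ.erase i, (u j : ℕ) :=
    sum_congr rfl fun j hj ↦ by rw [hne j (ne_of_mem_erase hj)]
  rw [← add_sum_erase _ _ (mem_univ i), ← add_sum_erase univ (fun j ↦ (u j : ℕ)) (mem_univ i),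
    hi, hrest]
  ring

open Classical in
theorem card_gridDigraph_inNeighbors_le (v : Fin d → Fin k) :
    #{u | (gridDigraph d k).Adj u v} ≤ d := by
  refine (card_le_card_of_forall_subsingleton (t := univ)
    (fun u i ↦ (v i : ℕ) = u i + 1 ∧ ∀ j ≠ i, v j = u j) (fun u hu ↦ ?_)
    fun i _ u hu u' hu' ↦ funext fun j ↦ ?_).trans_eq (card_fin d)
  · obtain ⟨i, hi⟩ := (mem_filter.1 hu).2
    exact ⟨i, mem_univ i, hi⟩
  · obtain ⟨hi, hne⟩ := hu.2
    obtain ⟨hi', hne'⟩ := hu'.2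
    grind

open Classical in
theorem card_gridDigraph_outNeighbors_le (u : Fin d → Fin k) :
    #{v | (gridDigraph d k).Adj u v} ≤ d := by
  refine (card_le_card_of_forall_subsingleton (t := univ)
    (fun v i ↦ (v i : ℕ) = u i + 1 ∧ ∀ j ≠ i, v j = u j) (fun v hv ↦ ?_)
    fun i _ v hv v' hv' ↦ funext fun j ↦ ?_).trans_eq (card_fin d)
  · obtain ⟨i, hi⟩ := (mem_filter.1 hv).2
    exact ⟨i, mem_univ i, hi⟩
  · obtain ⟨hi, hne⟩ := hv.2
    obtain ⟨hi', hne'⟩ := hv'.2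
    grind

theorem exists_gridDigraph_adj {v : Fin d → Fin k} (hv : 0 < ∑ i, (v i : ℕ)) :
    ∃ u, (gridDigraph d k).Adj u v := by
  obtain ⟨i, -, hi⟩ := exists_ne_zero_of_sum_ne_zero hv.ne'
  refine ⟨Function.update v i ⟨v i - 1, (Nat.sub_le _ _).trans_lt (v i).isLt⟩, i, ?_, ?_⟩
  · simp only [Function.update_self]
    omega
  · exact fun j hj ↦ (Function.update_of_ne hj _ _).symm

theorem isBoundedGrading_gridDigraph (d k : ℕ) :
    IsBoundedGrading (gridDigraph d k) (fun u ↦ ∑ i, (u i : ℕ)) d :=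
  .of_exists_adj sum_val_eq_of_gridDigraph_adj card_gridDigraph_inNeighbors_le
    card_gridDigraph_outNeighbors_le fun _ ↦ exists_gridDigraph_adj

end Grid

/-- For all `d, k ≥ 1`, the oriented Ramsey number of the grid digraph
`Γ⃗_{d,k}` is at most `10⁹ · d³ · 2^(4d) · k^d`. -/
theorem grid_oriented_ramsey (d k : ℕ) (hd : 1 ≤ d) (hk : 1 ≤ k) :
    orientedRamsey (gridDigraph d k) ≤ 10 ^ 9 * d ^ 3 * 2 ^ (4 * d) * k ^ d := by
  refine (grid_oriented_ramsey_general (isBoundedGrading_gridDigraph d k) hd).trans ?_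
  rw [Fintype.card_fun, Fintype.card_fin, Fintype.card_fin]
  gcongr
  norm_num
end
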